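/- arXiv:quant-ph/0512012 — 4 statements merged into one kernel-verified Lean document; each statement's English description precedes it below -/
import Mathlib

section
/- Upper bound to the random Schmidt robustness: let d ≥ 2, 1 ≤ n < d, and let ψ = Σ_i a_i |ii⟩ be a unit vector with ordered coefficients a_1 ≥ a_2 ≥ … ≥ a_d ≥ 0 and Σ_i a_i² = 1. Then the matrix ψψ† + (a_1 a_2 (d−n)/(dn−1)) · 𝟙 on ℂ^d ⊗ ℂ^d has Schmidt number at most n. -/
open Matrix BigOperators Kronecker ComplexOrder

/-- The d×d matrix `M_v` associated with a vector `v` on ℂ^d ⊗ ℂ^d, `(M_v)_{ij} = v (i,j)`. -/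
def toMat (d : ℕ) (v : Fin d × Fin d → ℂ) : Matrix (Fin d) (Fin d) ℂ :=
  Matrix.of fun i j => v (i, j)

/-- `ρ` has Schmidt number at most `n`: it is a finite sum of `w wᴴ` with each `w` of
Schmidt rank (i.e. rank of the associated d×d matrix) at most `n`. -/
def SchmidtNumberLE (d : ℕ) (ρ : Matrix (Fin d × Fin d) (Fin d × Fin d) ℂ) (n : ℕ) : Prop :=
  ∃ (k : ℕ) (w : Fin k → (Fin d × Fin d → ℂ)),
    (∀ i, (toMat d (w i)).rank ≤ n) ∧
    ρ = ∑ i, Matrix.vecMulVec (w i) (star (w i))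

/-- The vector `Σ_i a_i |ii⟩`. -/
noncomputable def ketDiag (d : ℕ) (a : Fin d → ℝ) : Fin d × Fin d → ℂ :=
  fun p => if p.1 = p.2 then ((a p.1 : ℝ) : ℂ) else 0


namespace RSR

lemma sn_zero (d n : ℕ) : SchmidtNumberLE d 0 n :=
  ⟨0, Fin.elim0, fun i => i.elim0, by simp⟩

lemma sn_add {d n : ℕ} {ρ σ : Matrix (Fin d × Fin d) (Fin d × Fin d) ℂ}
    (h1 : SchmidtNumberLE d ρ n) (h2 : SchmidtNumberLE d σ n) : SchmidtNumberLE d (ρ + σ) n := by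
  obtain ⟨k, w, hw, rfl⟩ := h1
  obtain ⟨l, v, hv, rfl⟩ := h2
  refine ⟨k + l, Fin.append w v, ?_, ?_⟩
  · intro i
    refine Fin.addCases (fun i => ?_) (fun i => ?_) i
    · simpa using hw i
    · simpa using hv i
  · rw [Fin.sum_univ_add]; simp

lemma sn_sum {d n : ℕ} {ι : Type*} (s : Finset ι)
    (ρ : ι → Matrix (Fin d × Fin d) (Fin d × Fin d) ℂ)
    (h : ∀ i ∈ s, SchmidtNumberLE d (ρ i) n) : SchmidtNumberLE d (∑ i ∈ s, ρ i) n := by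
  classical
  induction s using Finset.induction_on with
  | empty => simpa using sn_zero d n
  | insert a s ha ih =>
    rw [Finset.sum_insert ha]
    exact sn_add (h a (by simp)) (ih fun i hi => h i (by simp [hi]))

/-- local diagonal filter -/
lemma sn_filter {d n : ℕ} {ρ : Matrix (Fin d × Fin d) (Fin d × Fin d) ℂ}
    (h : SchmidtNumberLE d ρ n) (x y : Fin d → ℝ) :
    SchmidtNumberLE d (Matrix.of fun p q =>
      ((x p.1 * y p.2 : ℝ) : ℂ) * ((x q.1 * y q.2 : ℝ) : ℂ) * ρ p q) n := by
  obtain ⟨k, w, hw, rfl⟩ := h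
  refine ⟨k, fun i p => ((x p.1 * y p.2 : ℝ) : ℂ) * w i p, ?_, ?_⟩
  · intro i
    have : toMat d (fun p => ((x p.1 * y p.2 : ℝ) : ℂ) * w i p) =
        Matrix.diagonal (fun i => (x i : ℂ)) * toMat d (w i) *
          Matrix.diagonal (fun i => (y i : ℂ)) := by
      ext a b
      simp [toMat, Matrix.mul_diagonal, Matrix.diagonal_mul]
      ring
    rw [this]
    exact (Matrix.rank_mul_le_left _ _).trans ((Matrix.rank_mul_le_right _ _).trans (hw i))
  · ext p q
    simp only [Matrix.of_apply, Matrix.sum_apply, Matrix.vecMulVec_apply, Finset.mul_sum,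
      Pi.star_apply, star_mul', RCLike.star_def, Complex.conj_ofReal]
    refine Finset.sum_congr rfl fun i _ => ?_
    ring

lemma sn_smul {d n : ℕ} {ρ : Matrix (Fin d × Fin d) (Fin d × Fin d) ℂ}
    (h : SchmidtNumberLE d ρ n) (c : ℝ) (hc : 0 ≤ c) : SchmidtNumberLE d ((c : ℂ) • ρ) n := by
  have := sn_filter h (fun _ => √c) (fun _ => 1)
  convert this using 1
  ext p q
  simp only [Matrix.smul_apply, Matrix.of_apply, mul_one, smul_eq_mul]
  rw [← Complex.ofReal_mul, Real.mul_self_sqrt hc]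

lemma sn_basic {d n : ℕ} (X : Fin d → Fin n → ℂ) (Y : Fin n → Fin d → ℂ) :
    SchmidtNumberLE d (Matrix.of fun p q =>
      (∑ k, X p.1 k * Y k p.2) * star (∑ k, X q.1 k * Y k q.2)) n := by
  refine ⟨1, fun _ p => ∑ k, X p.1 k * Y k p.2, ?_, ?_⟩
  · intro _
    have : toMat d (fun p => ∑ k, X p.1 k * Y k p.2) = Matrix.of X * Matrix.of Y := by
      ext a b
      simp [toMat, Matrix.mul_apply]
    rw [this]
    refine (Matrix.rank_mul_le_left _ _).trans ?_
    simpa using Matrix.rank_le_width (Matrix.of X)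
  · ext p q
    simp [Matrix.vecMulVec_apply]

lemma sn_single {d n : ℕ} (hn : 1 ≤ n) (p : Fin d × Fin d) :
    SchmidtNumberLE d (Matrix.of fun q r => if q = p ∧ r = p then 1 else 0) n := by
  have h := sn_basic (d := d) (n := n) (fun i k => if i = p.1 ∧ k = ⟨0, hn⟩ then 1 else 0)
    (fun k j => if j = p.2 then 1 else 0)
  convert h using 1
  ext q r
  have e : ∀ q : Fin d × Fin d, (∑ k : Fin n, (if q.1 = p.1 ∧ k = ⟨0, hn⟩ then (1:ℂ) else 0) *
      (if q.2 = p.2 then 1 else 0)) = if q = p then 1 else 0 := by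
    intro q
    rw [Finset.sum_eq_single ⟨0, hn⟩]
    · by_cases h1 : q.1 = p.1 <;> by_cases h2 : q.2 = p.2 <;> simp [h1, h2, Prod.ext_iff]
    · intro b _ hb; simp [hb]
    · simp
  simp only [Matrix.of_apply, e]
  by_cases h1 : q = p <;> by_cases h2 : r = p <;> simp [h1, h2]

lemma sn_diag {d n : ℕ} (hn : 1 ≤ n) (c : Fin d × Fin d → ℝ) (hc : ∀ p, 0 ≤ c p) :
    SchmidtNumberLE d (Matrix.diagonal fun p => (c p : ℂ)) n := by
  have := sn_sum (d := d) (n := n) Finset.univ _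
    (fun p _ => sn_smul (sn_single hn p) (c p) (hc p))
  convert this using 1
  ext q r
  simp only [Matrix.sum_apply, Matrix.smul_apply, Matrix.of_apply, smul_eq_mul,
    Matrix.diagonal_apply]
  by_cases h : q = r
  · subst h; simp
  · rw [if_neg h, Finset.sum_eq_zero]
    intro p _
    rw [if_neg, mul_zero]
    rintro ⟨rfl, rfl⟩; exact h rfl

/-- phase-twirled states -/
noncomputable def rho (d : ℕ) (G F : Fin d → Fin d → ℝ) :
    Matrix (Fin d × Fin d) (Fin d × Fin d) ℂ :=
  Matrix.of fun p q => if p.1 = p.2 ∧ q.1 = q.2 then ((G p.1 q.1 : ℝ) : ℂ)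
    else if p = q then ((F p.1 p.2 : ℝ) : ℂ) else 0

def Ach (d n : ℕ) (G F : Fin d → Fin d → ℝ) : Prop := SchmidtNumberLE d (rho d G F) n

lemma ach_mono {d n : ℕ} (hn : 1 ≤ n) {G F G' F' : Fin d → Fin d → ℝ} (h : Ach d n G F)
    (hG : ∀ i j, i ≠ j → G' i j = G i j) (hG' : ∀ i, G i i ≤ G' i i)
    (hF : ∀ i j, i ≠ j → F i j ≤ F' i j) : Ach d n G' F' := by
  have := sn_add h (sn_diag (d := d) hn
    (fun p => if p.1 = p.2 then G' p.1 p.1 - G p.1 p.1 else F' p.1 p.2 - F p.1 p.2) (by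
      intro p
      by_cases hp : p.1 = p.2
      · simp [hp, hG']
      · simp [hp, hF _ _ hp]))
  unfold Ach
  convert this using 1
  ext ⟨i, j⟩ ⟨k, l⟩
  simp only [rho, Matrix.of_apply, Matrix.add_apply, Matrix.diagonal_apply, Prod.mk.injEq]
  by_cases h1 : i = j
  · subst h1
    by_cases h2 : k = l
    · subst h2
      by_cases h3 : i = k
      · subst h3; simp
      · simp [h3, hG _ _ h3]
    · have : ¬ (i = k ∧ i = l) := by rintro ⟨rfl, rfl⟩; exact h2 rfl
      simp [h2, this]
  · by_cases h3 : i = k ∧ j = l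
    · obtain ⟨rfl, rfl⟩ := h3
      simp [h1]
    · simp [h1, h3]

lemma ach_sum {d n : ℕ} {ι : Type*} (s : Finset ι) (c : ι → ℝ) (hc : ∀ i ∈ s, 0 ≤ c i)
    (G F : ι → Fin d → Fin d → ℝ) (h : ∀ i ∈ s, Ach d n (G i) (F i)) :
    Ach d n (fun a b => ∑ i ∈ s, c i * G i a b) (fun a b => ∑ i ∈ s, c i * F i a b) := by
  have := sn_sum s _ (fun i hi => sn_smul (h i hi) (c i) (hc i hi))
  unfold Ach
  convert this using 1
  ext p q
  simp only [Matrix.sum_apply, Matrix.smul_apply, rho, Matrix.of_apply, smul_eq_mul]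
  by_cases h1 : p.1 = p.2 ∧ q.1 = q.2
  · simp [h1]
  · by_cases h2 : p = q
    · simp only [h1, h2, if_true, if_false]
      by_cases h3 : q.1 = q.2 <;> simp_all
    · simp [h1, h2]

lemma ach_mix {d n : ℕ} {G F G' F' : Fin d → Fin d → ℝ} (h : Ach d n G F) (h' : Ach d n G' F')
    (x y : ℝ) (hx : 0 ≤ x) (hy : 0 ≤ y) :
    Ach d n (fun a b => x * G a b + y * G' a b) (fun a b => x * F a b + y * F' a b) := by
  have := ach_sum (n := n) (Finset.univ : Finset Bool) (fun b => if b then x else y)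
    (by intro i _; cases i <;> simp [hx, hy])
    (fun b => if b then G else G') (fun b => if b then F else F')
    (by intro i _; cases i <;> simp [h, h'])
  simpa using this

lemma ach_filter {d n : ℕ} {G F : Fin d → Fin d → ℝ} (h : Ach d n G F) (s : Fin d → ℝ)
    (hs : ∀ i, 0 ≤ s i) :
    Ach d n (fun a b => s a * s b * G a b) (fun a b => s a * s b * F a b) := by
  have := sn_filter h (fun i => √(s i)) (fun i => √(s i))
  unfold Ach
  convert this using 1
  ext ⟨i, j⟩ ⟨k, l⟩
  simp only [rho, Matrix.of_apply, Prod.mk.injEq]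
  by_cases h1 : i = j ∧ k = l
  · obtain ⟨rfl, rfl⟩ := h1
    simp [Real.mul_self_sqrt (hs _)]
  · rw [if_neg h1, if_neg h1]
    by_cases h2 : i = k ∧ j = l
    · obtain ⟨rfl, rfl⟩ := h2
      simp only [and_self, if_true]
      norm_cast
      have e1 := Real.mul_self_sqrt (hs i)
      have e2 := Real.mul_self_sqrt (hs j)
      calc s i * s j * F i j = (√(s i) * √(s i)) * (√(s j) * √(s j)) * F i j := by rw [e1, e2]
        _ = _ := by ring
    · simp [h2]

lemma char_sum {d : ℕ} (i j k l : Fin d) :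
    ∑ z : Fin d → ZMod 3, (ZMod.stdAddChar (z i - z j - (z k - z l)) : ℂ) =
      if (i = j ∧ k = l) ∨ (i = k ∧ j = l) then (3 : ℂ) ^ d else 0 := by
  by_cases h : (i = j ∧ k = l) ∨ (i = k ∧ j = l)
  · rw [if_pos h]
    have : ∀ z : Fin d → ZMod 3, (ZMod.stdAddChar (z i - z j - (z k - z l)) : ℂ) = 1 := by
      intro z
      rcases h with ⟨rfl, rfl⟩ | ⟨rfl, rfl⟩ <;> simp
    simp [this]
  · rw [if_neg h]
    have key : ∃ y : Fin d → ZMod 3, y i - y j - (y k - y l) ≠ 0 := by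
      by_cases h1 : i = j
      · subst h1
        refine ⟨Pi.single l 1, ?_⟩
        have : k ≠ l := by tauto
        simp [Pi.single_apply, this]
      · by_cases h2 : i = k
        · subst h2
          refine ⟨Pi.single l 1, ?_⟩
          have : j ≠ l := by tauto
          by_cases h3 : i = l
          · subst h3; simp [Pi.single_apply, this]
          · simp [Pi.single_apply, this, h3]
        · refine ⟨Pi.single i 1, ?_⟩
          by_cases h3 : l = i
          · subst h3; simp [Pi.single_apply, Ne.symm h1, Ne.symm h2]; decide
          · simp [Pi.single_apply, Ne.symm h1, Ne.symm h2, h3]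
    obtain ⟨y, hy⟩ := key
    have hne : (ZMod.stdAddChar (y i - y j - (y k - y l)) : ℂ) ≠ 1 := by
      intro h0
      apply hy
      apply ZMod.injective_stdAddChar (N := 3)
      rw [h0]; simp
    have e := Fintype.sum_equiv (Equiv.addRight y)
      (fun z : Fin d → ZMod 3 => (ZMod.stdAddChar ((z + y) i - (z + y) j - ((z + y) k - (z + y) l)) : ℂ))
      (fun z : Fin d → ZMod 3 => (ZMod.stdAddChar (z i - z j - (z k - z l)) : ℂ))
      (by intro z; simp)
    have e2 : ∀ z : Fin d → ZMod 3,
        (ZMod.stdAddChar ((z + y) i - (z + y) j - ((z + y) k - (z + y) l)) : ℂ) =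
        ZMod.stdAddChar (z i - z j - (z k - z l)) * ZMod.stdAddChar (y i - y j - (y k - y l)) := by
      intro z
      rw [← AddChar.map_add_eq_mul]
      congr 1
      simp only [Pi.add_apply]; ring
    simp only [e2, ← Finset.sum_mul] at e
    by_contra hS
    exact hne (mul_left_cancel₀ hS (by rw [e, mul_one]))

lemma ach_twirl {d n : ℕ} (X : Fin d → Fin n → ℂ) (Y : Fin n → Fin d → ℂ) (m : Fin d → ℝ)
    (hm : ∀ i, ∑ k, X i k * Y k i = (m i : ℂ)) :
    Ach d n (fun i j => m i * m j) (fun i j => ‖∑ k, X i k * Y k j‖ ^ 2) := by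
  have := sn_smul (sn_sum (d := d) (n := n) (Finset.univ : Finset (Fin d → ZMod 3)) _
    (fun z _ => sn_basic (fun i k => ZMod.stdAddChar (z i) * X i k)
      (fun k j => Y k j * ZMod.stdAddChar (- z j)))) (((3 : ℝ) ^ d)⁻¹) (by positivity)
  unfold Ach
  convert this using 1
  ext ⟨i, j⟩ ⟨k, l⟩
  have e : ∀ (z : Fin d → ZMod 3) (i j : Fin d),
      ∑ k, (ZMod.stdAddChar (z i) * X i k) * (Y k j * ZMod.stdAddChar (- z j)) =
      (ZMod.stdAddChar (z i - z j) : ℂ) * ∑ k, X i k * Y k j := by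
    intro z i j
    rw [sub_eq_add_neg, AddChar.map_add_eq_mul, Finset.mul_sum]
    exact Finset.sum_congr rfl fun k _ => by ring
  have e2 : ∀ (z : Fin d → ZMod 3), star (ZMod.stdAddChar (z k - z l) : ℂ) =
      ZMod.stdAddChar (-(z k - z l)) := by
    intro z; rw [AddChar.map_neg_eq_conj]; rfl
  simp only [Matrix.smul_apply, Matrix.sum_apply, Matrix.of_apply, e, star_mul', e2, smul_eq_mul,
    rho, Prod.mk.injEq]
  have e3 : ∀ z : Fin d → ZMod 3, (ZMod.stdAddChar (z i - z j) * ∑ k, X i k * Y k j) *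
      (ZMod.stdAddChar (-(z k - z l)) * star (∑ k', X k k' * Y k' l)) =
      (ZMod.stdAddChar (z i - z j - (z k - z l)) : ℂ) *
        ((∑ k, X i k * Y k j) * star (∑ k', X k k' * Y k' l)) := by
    intro z
    rw [sub_eq_add_neg (z i - z j), AddChar.map_add_eq_mul]; ring
  simp only [e3, ← Finset.sum_mul, char_sum]
  have h3 : (3 : ℂ) ^ d ≠ 0 := by positivity
  by_cases h1 : i = j ∧ k = l
  · obtain ⟨rfl, rfl⟩ := h1
    simp only [hm]
    simp [h3]
  · rw [if_neg h1]
    by_cases h2 : i = k ∧ j = l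
    · obtain ⟨rfl, rfl⟩ := h2
      simp only [and_self, or_true, if_true]
      rw [RCLike.star_def, Complex.mul_conj, Complex.normSq_eq_norm_sq]
      push_cast
      field_simp
    · simp [h1, h2]

end RSR

namespace RSR

lemma perm1 {m : ℕ} (f : Fin m → ℝ) (i : Fin m) :
    (m : ℝ) * ∑ σ : Equiv.Perm (Fin m), f (σ i) = (m.factorial : ℝ) * ∑ a, f a := by
  have h1 : ∀ j, ∑ σ : Equiv.Perm (Fin m), f (σ j) = ∑ σ : Equiv.Perm (Fin m), f (σ i) := by
    intro j
    refine Fintype.sum_equiv (Equiv.mulRight (Equiv.swap i j)) _ _ ?_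
    intro σ; simp
  have h2 : ∑ j, ∑ σ : Equiv.Perm (Fin m), f (σ j) = (m.factorial : ℝ) * ∑ a, f a := by
    rw [Finset.sum_comm]
    have : ∀ σ : Equiv.Perm (Fin m), ∑ j, f (σ j) = ∑ a, f a := fun σ => Equiv.sum_comp σ f
    simp [this, Fintype.card_perm]
  rw [← h2]
  simp [h1]

lemma perm2 {m : ℕ} (f : Fin m → Fin m → ℝ) (i j : Fin m) (hij : i ≠ j) :
    ((m : ℝ) * (m - 1)) * ∑ σ : Equiv.Perm (Fin m), f (σ i) (σ j) =
      (m.factorial : ℝ) * (∑ a, ∑ b, f a b - ∑ a, f a a) := by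
  have h1 : ∀ j' ∈ Finset.univ.erase i, ∑ σ : Equiv.Perm (Fin m), f (σ i) (σ j') =
      ∑ σ : Equiv.Perm (Fin m), f (σ i) (σ j) := by
    intro j' hj'
    have hj' : j' ≠ i := by simpa using hj'
    refine Fintype.sum_equiv (Equiv.mulRight (Equiv.swap j j')) _ _ ?_
    intro σ
    simp [Equiv.swap_apply_of_ne_of_ne hij hj'.symm]
  have h2 : ∑ j' ∈ Finset.univ.erase i, ∑ σ : Equiv.Perm (Fin m), f (σ i) (σ j') =
      ∑ σ : Equiv.Perm (Fin m), (∑ b, f (σ i) b - f (σ i) (σ i)) := by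
    rw [Finset.sum_comm]
    refine Finset.sum_congr rfl fun σ _ => ?_
    rw [← Equiv.sum_comp σ (fun b => f (σ i) b),
      ← Finset.add_sum_erase Finset.univ (fun b => f (σ i) (σ b)) (Finset.mem_univ i)]
    ring
  rw [Finset.sum_congr rfl h1] at h2
  have hm : 1 ≤ m := by have := i.2; omega
  simp only [Finset.sum_const, Finset.card_erase_of_mem (Finset.mem_univ i), Finset.card_univ,
    Fintype.card_fin, nsmul_eq_mul, Nat.cast_sub hm, Nat.cast_one] at h2
  rw [mul_assoc, h2, perm1 (fun a => ∑ b, f a b - f a a) i, Finset.sum_sub_distrib]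

lemma exists_fourier (m n : ℕ) (hm : 1 ≤ m) (hn : n ≤ m) :
    ∃ U : Fin m → Fin n → ℂ, (∀ i k, U i k * star (U i k) = 1) ∧
      ∀ k l, ∑ i, star (U i k) * U i l = if k = l then (m : ℂ) else 0 := by
  have hm0 : m ≠ 0 := by omega
  set ζ := Complex.exp (2 * Real.pi * Complex.I / m) with hζ
  have hp : IsPrimitiveRoot ζ m := Complex.isPrimitiveRoot_exp m hm0
  have hnorm : ‖ζ‖ = 1 := hp.norm'_eq_one hm0
  have hs : ζ * star ζ = 1 := by
    rw [RCLike.star_def, Complex.mul_conj, Complex.normSq_eq_norm_sq, hnorm]; simp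
  have hs' : ∀ a : ℕ, ζ ^ a * star ζ ^ a = 1 := fun a => by rw [← mul_pow, hs, one_pow]
  refine ⟨fun i k => ζ ^ (i.val * k.val), ?_, ?_⟩
  · intro i k
    simp only [star_pow]; exact hs' _
  · intro k l
    have e : ∀ i : Fin m, star (ζ ^ (i.val * k.val)) * ζ ^ (i.val * l.val) =
        (star ζ ^ k.val * ζ ^ l.val) ^ i.val := by
      intro i
      rw [star_pow, mul_pow, ← pow_mul, ← pow_mul, mul_comm k.val, mul_comm l.val]
    simp only [e]
    rw [Fin.sum_univ_eq_sum_range (fun i => (star ζ ^ k.val * ζ ^ l.val) ^ i) m]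
    by_cases h : k = l
    · subst h
      have : star ζ ^ k.val * ζ ^ k.val = 1 := by rw [mul_comm, hs']
      simp only [this]; simp
    · rw [if_neg h]
      have hne : star ζ ^ k.val * ζ ^ l.val ≠ 1 := by
        intro h1
        have : ζ ^ k.val = ζ ^ l.val := by
          calc ζ ^ k.val = ζ ^ k.val * (star ζ ^ k.val * ζ ^ l.val) := by rw [h1, mul_one]
            _ = ζ ^ l.val := by rw [← mul_assoc, hs', one_mul]
        exact h (Fin.ext (hp.pow_inj (by omega) (by omega) this))
      have hpow : (star ζ ^ k.val * ζ ^ l.val) ^ m = 1 := by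
        rw [mul_pow, ← pow_mul, ← pow_mul, mul_comm k.val, mul_comm l.val, pow_mul, pow_mul,
          ← star_pow, hp.pow_eq_one]; simp
      have := geom_sum_mul (star ζ ^ k.val * ζ ^ l.val) m
      rw [hpow, sub_self] at this
      exact (mul_eq_zero.mp this).resolve_right (sub_ne_zero.mpr hne)

lemma parseval {m n : ℕ} (U : Fin m → Fin n → ℂ)
    (hU : ∀ k l, ∑ i, star (U i k) * U i l = if k = l then (m : ℂ) else 0) (μ : Fin n → ℝ) :
    ∑ i, ∑ j, ‖∑ k, (μ k : ℂ) * U i k * star (U j k)‖ ^ 2 = (m : ℝ) ^ 2 * ∑ k, μ k ^ 2 := by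
  have h : ((∑ i, ∑ j, ‖∑ k, (μ k : ℂ) * U i k * star (U j k)‖ ^ 2 : ℝ) : ℂ) =
      (((m : ℝ) ^ 2 * ∑ k, μ k ^ 2 : ℝ) : ℂ) := by
    push_cast
    have e : ∀ i j, ((‖∑ k, (μ k : ℂ) * U i k * star (U j k)‖ : ℝ) : ℂ) ^ 2 =
        ∑ k, ∑ l, ((μ k : ℂ) * (μ l : ℂ)) * ((star (U i l) * U i k) * (star (U j k) * U j l)) := by
      intro i j
      rw [← Complex.mul_conj', ← RCLike.star_def, star_sum, Finset.sum_mul_sum]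
      refine Finset.sum_congr rfl fun k _ => Finset.sum_congr rfl fun l _ => ?_
      simp only [star_mul', star_star, RCLike.star_def, Complex.conj_ofReal, Complex.conj_conj]
      ring
    simp only [e]
    have e1 : ∀ i, ∑ j, ∑ k, ∑ l, ((μ k : ℂ) * (μ l : ℂ)) *
        ((star (U i l) * U i k) * (star (U j k) * U j l)) =
        ∑ k, ((μ k : ℂ) ^ 2 * m) * (star (U i k) * U i k) := by
      intro i
      rw [Finset.sum_comm]
      refine Finset.sum_congr rfl fun k _ => ?_
      rw [Finset.sum_comm]
      have : ∀ l, ∑ j, ((μ k : ℂ) * (μ l : ℂ)) *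
        ((star (U i l) * U i k) * (star (U j k) * U j l)) =
        if k = l then ((μ k : ℂ) * (μ l : ℂ)) * ((star (U i l) * U i k) * m) else 0 := by
        intro l
        rw [← Finset.mul_sum, ← Finset.mul_sum, hU]
        split_ifs <;> simp
      simp only [this, Finset.sum_ite_eq, Finset.mem_univ, if_true]
      ring
    simp only [e1]
    rw [Finset.sum_comm]
    simp only [← Finset.mul_sum, hU, if_true]
    rw [Finset.mul_sum]
    exact Finset.sum_congr rfl fun k _ => by ring
  exact_mod_cast h

end RSR

namespace RSR

lemma pieceA (d n : ℕ) (hd : 2 ≤ d) (hn : 1 ≤ n) (hnd : n ≤ d) :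
    Ach d n (fun _ _ => 1) (fun _ _ => ((d : ℝ) - n) / (n * (d - 1))) := by
  obtain ⟨U, hU1, hU2⟩ := exists_fourier d n (by omega) hnd
  have hn0 : (n : ℂ) ≠ 0 := by exact_mod_cast (by omega : n ≠ 0)
  have hn0' : (n : ℝ) ≠ 0 := by exact_mod_cast (by omega : n ≠ 0)
  have hd2 : (2 : ℝ) ≤ d := by exact_mod_cast hd
  have hf0 : (d.factorial : ℝ) ≠ 0 := by exact_mod_cast d.factorial_ne_zero
  set μ : Fin n → ℝ := fun _ => 1 / n with hμ
  have hdiag : ∀ a, ∑ k, (μ k : ℂ) * U a k * star (U a k) = ((1 : ℝ) : ℂ) := by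
    intro a
    simp only [mul_assoc, hU1]
    simp [hμ, hn0]
  have h := ach_sum (Finset.univ : Finset (Equiv.Perm (Fin d))) (fun _ => 1 / (d.factorial : ℝ))
    (fun _ _ => by positivity) _ _
    (fun σ _ => ach_twirl (fun i k => (μ k : ℂ) * U (σ i) k) (fun k j => star (U (σ j) k))
      (fun _ => 1) (fun i => hdiag (σ i)))
  refine ach_mono hn h ?_ ?_ ?_
  · intro i j _
    simp [Fintype.card_perm, hf0]
  · intro i
    simp [Fintype.card_perm, hf0]
  · intro i j hij
    have hp := perm2 (fun a b => ‖∑ k, (μ k : ℂ) * U a k * star (U b k)‖ ^ 2) i j hij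
    rw [parseval U hU2] at hp
    simp only [hdiag] at hp
    rw [← Finset.mul_sum]
    set S := ∑ σ : Equiv.Perm (Fin d), ‖∑ k, (μ k : ℂ) * U (σ i) k * star (U (σ j) k)‖ ^ 2
    apply le_of_eq
    rw [eq_div_iff (by have : (d:ℝ) - 1 ≠ 0 := by linarith
                       positivity)]
    simp [hμ] at hp
    have h1 : (d : ℝ) ≠ 0 := by linarith
    apply mul_left_cancel₀ h1
    apply mul_left_cancel₀ hf0
    field_simp at hp ⊢
    linear_combination hp

lemma pieceB (d n : ℕ) (hn : 2 ≤ n) (hnd : n ≤ d) :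
    Ach d n (fun i j => if i = j then 1 + ((d : ℝ) - n) / (n - 1) else 1) (fun _ _ => 0) := by
  have hn2 : (2 : ℝ) ≤ n := by exact_mod_cast hn
  have hd2 : (n : ℝ) ≤ d := by exact_mod_cast hnd
  have hf0 : (0 : ℝ) < d.factorial := by exact_mod_cast d.factorial_pos
  set e : Fin d → ℝ := fun a => if a.val < n then 1 else 0 with he
  have hee : ∀ a, e a * e a = e a := by intro a; simp [he]
  have hsum : ∑ a, e a = n := by
    simp only [he]
    rw [Fin.sum_univ_eq_sum_range (fun a => if a < n then (1:ℝ) else 0) d,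
      ← Finset.sum_filter]
    have : (Finset.range d).filter (fun a => a < n) = Finset.range n := by
      ext a; simp; omega
    simp [this]
  have hM : ∀ (a b : Fin d), ∑ k : Fin n, (if a.val = k.val then (1:ℂ) else 0) *
      (if b.val = k.val then 1 else 0) = if a = b then (e a : ℂ) else 0 := by
    intro a b
    by_cases hab : a = b
    · subst hab
      by_cases ha : a.val < n
      · rw [Finset.sum_eq_single ⟨a.val, ha⟩]
        · simp [he, ha]
        · intro k _ hk
          have : a.val ≠ k.val := fun h => hk (Fin.ext h.symm)
          simp [this]
        · simp
      · rw [Finset.sum_eq_zero]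
        · simp [he, ha]
        · intro k _
          have : a.val ≠ k.val := by have := k.2; omega
          simp [this]
    · rw [Finset.sum_eq_zero]
      · simp [hab]
      · intro k _
        by_cases h1 : a.val = k.val
        · have : b.val ≠ k.val := fun h => hab (Fin.ext (h1.trans h.symm))
          simp [this]
        · simp [h1]
  have h1 : ∀ σ : Equiv.Perm (Fin d), Ach d n (fun i j => e (σ i) * e (σ j)) (fun _ _ => 0) := by
    intro σ
    refine ach_mono (by omega) (ach_twirl (fun i k => if (σ i).val = k.val then (1:ℂ) else 0)
      (fun k j => if (σ j).val = k.val then (1:ℂ) else 0) (fun i => e (σ i)) ?_) ?_ ?_ ?_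
    · intro i; rw [hM]; simp
    · intros; rfl
    · intros; rfl
    · intro i j hij; rw [hM]; simp [hij]
  set w : ℝ := d * (d - 1) / (d.factorial * (n * (n - 1))) with hw
  have h := ach_sum (Finset.univ : Finset (Equiv.Perm (Fin d))) (fun _ => w)
    (fun _ _ => by
      have : (0:ℝ) ≤ d - 1 := by linarith
      have : (0:ℝ) ≤ n - 1 := by linarith
      positivity) _ _ (fun σ _ => h1 σ)
  have hd0 : (d : ℝ) ≠ 0 := by linarith
  have hd1 : (d : ℝ) - 1 ≠ 0 := by linarith
  have hn0 : (n : ℝ) ≠ 0 := by linarith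
  have hn1 : (n : ℝ) - 1 ≠ 0 := by linarith
  refine ach_mono (by omega) h ?_ ?_ ?_
  · intro i j hij
    have hp := perm2 (fun a b => e a * e b) i j hij
    simp only [hee, ← Finset.mul_sum, ← Finset.sum_mul, hsum] at hp
    rw [← Finset.mul_sum, if_neg hij, hw]
    field_simp
    linear_combination -hp
  · intro i
    have hp := perm1 e i
    rw [hsum] at hp
    simp only [hee]
    rw [← Finset.mul_sum, if_true, hw]
    apply le_of_eq
    field_simp
    linear_combination (d - 1 : ℝ) * hp
  · intro i j hij
    simp

lemma poly_ineq (D r : ℝ) (hr : 1 ≤ r) (hD : r + 1 ≤ D) :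
    D * ((D - r) ^ 2 + r * (D + 2) ^ 2) ≤
      ((D + 1) * (r + 1) - 1) ^ 2 + 2 * (D - r) * (D - 1) * ((D + 1) * (r + 1) - 1) := by
  obtain ⟨x, rfl⟩ : ∃ x, r = 1 + x := ⟨r - 1, by ring⟩
  obtain ⟨y, rfl⟩ : ∃ y, D = 2 + x + y := ⟨D - 2 - x, by ring⟩
  have hx : 0 ≤ x := by linarith
  have hy : 0 ≤ y := by linarith
  rw [← sub_nonneg]
  ring_nf
  positivity

lemma pieceC (D r : ℕ) (hr : 1 ≤ r) (hD : r + 1 ≤ D) (c : ℝ)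
    (hc : c = ((D : ℝ) - r) / ((D + 1) * (r + 1) - 1)) :
    Ach (D + 1) (r + 1) (fun _ _ => 1) (fun i j => if i = 0 ∨ j = 0 then c else 2 * c) := by
  obtain ⟨U, hU1, hU2⟩ := exists_fourier D (r + 1) (by omega) hD
  have hr1 : (1 : ℝ) ≤ r := by exact_mod_cast hr
  have hD1 : (r : ℝ) + 1 ≤ D := by exact_mod_cast hD
  have hf0 : (D.factorial : ℝ) ≠ 0 := by exact_mod_cast D.factorial_ne_zero
  have hden : (0:ℝ) < (D + 1) * (r + 1) - 1 := by nlinarith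
  have hc0 : 0 ≤ c := by rw [hc]; apply div_nonneg <;> linarith
  have h1c : 1 - c = r * (D + 2) / ((D + 1) * (r + 1) - 1) := by
    rw [hc]; field_simp; ring
  have h1c0 : 0 ≤ 1 - c := by rw [h1c]; positivity
  set μ : Fin (r + 1) → ℝ := Fin.cons c (fun _ => (1 - c) / r) with hμ
  have hμ0 : ∀ k, 0 ≤ μ k := by
    intro k
    refine Fin.cases ?_ (fun k => ?_) k
    · simpa [hμ] using hc0
    · simp only [hμ, Fin.cons_succ]; positivity
  have hμs : ∑ k, μ k = 1 := by
    rw [Fin.sum_univ_succ]; simp [hμ]; field_simp; ring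
  have hμs2 : ∑ k, μ k ^ 2 = c ^ 2 + (1 - c) ^ 2 / r := by
    rw [Fin.sum_univ_succ]; simp [hμ]; field_simp
  have hdiag : ∀ a, ∑ k, (μ k : ℂ) * U a k * star (U a k) = ((1 : ℝ) : ℂ) := by
    intro a
    simp only [mul_assoc, hU1, mul_one]
    exact_mod_cast hμs
  have hsq : ∀ k, ((√(μ k) : ℝ) : ℂ) * ((√(μ k) : ℝ) : ℂ) = (μ k : ℂ) := by
    intro k; rw [← Complex.ofReal_mul, Real.mul_self_sqrt (hμ0 k)]
  set X : Equiv.Perm (Fin D) → Fin (D + 1) → Fin (r + 1) → ℂ := fun σ =>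
    Fin.cons (fun k => if k = 0 then 1 else 0) (fun i k => ((√(μ k) : ℝ) : ℂ) * U (σ i) k) with hX
  have hss : ∀ σ i j, ∑ k, X σ (Fin.succ i) k * star (X σ (Fin.succ j) k) =
      ∑ k, (μ k : ℂ) * U (σ i) k * star (U (σ j) k) := by
    intro σ i j
    refine Finset.sum_congr rfl fun k _ => ?_
    simp only [hX, Fin.cons_succ, star_mul', RCLike.star_def, Complex.conj_ofReal]
    rw [← hsq]; ring
  have hnU : ∀ i k, ‖U i k‖ = 1 := by
    intro i k
    have h := hU1 i k
    have h2 : ‖U i k‖ * ‖U i k‖ = 1 := by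
      rw [← norm_star (U i k)] 
      nth_rewrite 1 [norm_star]
      rw [← norm_mul, h, norm_one]
    nlinarith [norm_nonneg (U i k)]
  have h := ach_sum (Finset.univ : Finset (Equiv.Perm (Fin D))) (fun _ => 1 / (D.factorial : ℝ))
    (fun _ _ => by positivity) _ _
    (fun σ _ => ach_twirl (X σ) (fun k j => star (X σ j k)) (fun _ => 1) (by
      intro i
      refine Fin.cases ?_ (fun i => ?_) i
      · simp [hX]
      · rw [hss, hdiag]))
  refine ach_mono (by omega) h ?_ ?_ ?_
  · intro i j _
    simp [Fintype.card_perm, hf0]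
  · intro i
    simp [Fintype.card_perm, hf0]
  · intro i j
    refine Fin.cases ?_ (fun i => ?_) i
    · refine Fin.cases (fun h => absurd rfl h) (fun j => ?_) j
      intro _
      have : ∀ σ, ‖∑ k, X σ 0 k * star (X σ j.succ k)‖ ^ 2 = c := by
        intro σ
        simp [hX, hnU]
        simp [hμ, Real.sq_sqrt hc0]
      simp only [this]
      simp [Fintype.card_perm, hf0]
    · refine Fin.cases ?_ (fun j => ?_) j
      · intro _
        have : ∀ σ, ‖∑ k, X σ i.succ k * star (X σ 0 k)‖ ^ 2 = c := by
          intro σ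
          simp [hX]
          simp [hμ, hnU, Real.sq_sqrt hc0]
        simp only [this]
        simp [Fintype.card_perm, hf0]
      · intro hij
        have hij : i ≠ j := fun h => hij (by rw [h])
        simp only [hss, Fin.succ_ne_zero, or_self, if_false]
        have hp := perm2 (fun a b => ‖∑ k, (μ k : ℂ) * U a k * star (U b k)‖ ^ 2) i j hij
        rw [parseval U hU2, hμs2] at hp
        simp only [hdiag] at hp
        rw [← Finset.mul_sum]
        set S := ∑ σ : Equiv.Perm (Fin D), ‖∑ k, (μ k : ℂ) * U (σ i) k * star (U (σ j) k)‖ ^ 2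
        have hp' : ((D:ℝ) * (D - 1)) * (1 / D.factorial * S) =
            D ^ 2 * (c ^ 2 + (1 - c) ^ 2 / r) - D := by
          simp at hp
          field_simp at hp ⊢
          linear_combination hp
        have hpos : (0:ℝ) < (D:ℝ) * (D - 1) := by
          apply mul_pos <;> linarith
        refine le_of_mul_le_mul_left ?_ hpos
        rw [hp', h1c, hc]
        have hpoly := poly_ineq (D : ℝ) r hr1 hD1
        set q : ℝ := (D + 1) * (r + 1) - 1
        have e1 : (D:ℝ) ^ 2 * (((D - r) / q) ^ 2 + (r * (D + 2) / q) ^ 2 / r) - D =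
            (D / q ^ 2) * (D * ((D - r) ^ 2 + r * (D + 2) ^ 2) - q ^ 2) := by
          field_simp
        have e2 : (D:ℝ) * (D - 1) * (2 * ((D - r) / q)) =
            (D / q ^ 2) * (2 * (D - r) * (D - 1) * q) := by
          field_simp
        rw [e1, e2]
        refine mul_le_mul_of_nonneg_left (by linarith) (by positivity)

end RSR

namespace RSR

lemma rho_target (d : ℕ) (a : Fin d → ℝ) (c : ℝ) :
    Matrix.vecMulVec (ketDiag d a) (star (ketDiag d a)) +
        c • (1 : Matrix (Fin d × Fin d) (Fin d × Fin d) ℂ) =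
      rho d (fun i j => a i * a j + if i = j then c else 0) (fun _ _ => c) := by
  ext ⟨i, j⟩ ⟨k, l⟩
  simp only [rho, Matrix.add_apply, Matrix.vecMulVec_apply, Matrix.smul_apply, Matrix.of_apply,
    ketDiag, Pi.star_apply, Matrix.one_apply, Prod.mk.injEq]
  by_cases h1 : i = j
  · subst h1
    by_cases h2 : k = l
    · subst h2
      by_cases h3 : i = k
      · subst h3; simp
      · simp [h3]
    · have : ¬ (i = k ∧ i = l) := by rintro ⟨rfl, rfl⟩; exact h2 rfl
      simp [h2, this]
  · by_cases h3 : i = k ∧ j = l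
    · obtain ⟨rfl, rfl⟩ := h3
      simp [h1]
    · simp [h1, h3]

/-- the normalised statement -/
lemma normalized (D n : ℕ) (hn : 1 ≤ n) (hnd : n ≤ D) (p c : ℝ) (hp0 : 0 < p) (hp1 : p ≤ 1)
    (hc : c = ((D : ℝ) + 1 - n) / ((D + 1) * n - 1)) :
    Ach (D + 1) n
      (fun i j => 1 + if i = j then (if i = 0 then p * c else c / p) else 0)
      (fun i j => if i = 0 ∨ j = 0 then c else c / p) := by
  have hn1 : (1 : ℝ) ≤ n := by exact_mod_cast hn
  have hnD : (n : ℝ) ≤ D := by exact_mod_cast hnd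
  have hden : (0:ℝ) < (D + 1) * n - 1 := by nlinarith
  have hc0 : 0 ≤ c := by rw [hc]; apply div_nonneg <;> linarith
  have hcp : c ≤ c / p := by
    rw [le_div_iff₀ hp0]; nlinarith
  have hpc : p * c ≤ c := by nlinarith
  have hA := pieceA (D + 1) n (by omega) hn (by omega)
  rcases Nat.lt_or_ge n 2 with h2 | h2
  · have : n = 1 := by omega
    subst this
    have hD0 : (D : ℝ) ≠ 0 := by linarith
    have hc1 : c = 1 := by rw [hc]; push_cast; field_simp; simp; omega
    refine ach_mono hn hA ?_ ?_ ?_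
    · intro i j hij; simp [hij]
    · intro i
      by_cases hi : i = 0 <;> simp [hi] <;> positivity
    · intro i j hij
      have : (((D + 1 : ℕ) : ℝ) - (1 : ℕ)) / ((1 : ℕ) * ((D + 1 : ℕ) - 1)) = 1 := by
        push_cast; field_simp; simp [hD0]
      rw [this, ← hc1]
      split_ifs
      · exact le_rfl
      · exact hcp
  · obtain ⟨r, rfl⟩ : ∃ r, n = r + 1 := ⟨n - 1, by omega⟩
    have hB := pieceB (D + 1) (r + 1) h2 (by omega)
    have hC := pieceC D r (by omega) hnd c (by rw [hc]; push_cast; ring_nf)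
    have hr : (1:ℝ) ≤ r := by exact_mod_cast (by omega : 1 ≤ r)
    push_cast at hn1 hnD hden hc hA hB
    have hD : (2:ℝ) ≤ D := by linarith
    set q : ℝ := (r + 1) * D / ((D + 1) * (r + 1) - 1) with hq
    have h1q : 1 - q = r / ((D + 1) * (r + 1) - 1) := by
      rw [hq, eq_div_iff hden.ne', sub_mul, div_mul_cancel₀ _ hden.ne']; ring
    have hq0 : 0 ≤ q := by rw [hq]; positivity
    have h1q0 : 0 ≤ 1 - q := by rw [h1q]; positivity
    have hAB := ach_mix (ach_mix hA hB q (1 - q) hq0 h1q0) hC p (1 - p) hp0.le (by linarith)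
    have eF : q * (((D:ℝ) + 1 - (r + 1)) / ((r + 1) * (D + 1 - 1))) = c := by
      rw [hq, hc]
      have : (D : ℝ) + 1 - 1 ≠ 0 := by linarith
      field_simp
      ring
    have eG : (1 - q) * (((D:ℝ) + 1 - (r + 1)) / (r + 1 - 1)) = c := by
      rw [h1q, hc]
      have : (r : ℝ) + 1 - 1 ≠ 0 := by linarith
      field_simp
      ring
    refine ach_mono hn hAB ?_ ?_ ?_
    · intro i j hij
      simp [hij]
    · intro i
      simp only [if_true]
      have : p * (q * 1 + (1 - q) * (1 + ((D:ℝ) + 1 - (r + 1)) / (r + 1 - 1))) + (1 - p) * 1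
          = 1 + p * c := by linear_combination p * eG
      rw [this]
      split_ifs
      · exact le_rfl
      · linarith
    · intro i j hij
      simp only [mul_zero, add_zero]
      rw [eF]
      split_ifs
      · linarith
      · rw [le_div_iff₀ hp0]
        nlinarith [mul_nonneg hc0 (sq_nonneg (1 - p))]

end RSR

/-- Upper bound to the random Schmidt robustness:
`ψψᴴ + (a₁a₂(d-n)/(dn-1)) 𝟙` has Schmidt number at most `n`. -/
theorem upper_bound_random_schmidt_robustness (d n : ℕ) (hd : 2 ≤ d) (hn : 1 ≤ n)
    (hnd : n < d) (a : Fin d → ℝ) (ha : ∀ i, 0 ≤ a i)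
    (hord : ∀ i j : Fin d, i ≤ j → a j ≤ a i) (hnorm : ∑ i, a i ^ 2 = 1) :
    SchmidtNumberLE d
      (Matrix.vecMulVec (ketDiag d a) (star (ketDiag d a)) +
        (a ⟨0, by omega⟩ * a ⟨1, by omega⟩ * (((d : ℝ) - n) / ((d : ℝ) * n - 1))) •
          (1 : Matrix (Fin d × Fin d) (Fin d × Fin d) ℂ)) n := by
  obtain ⟨D, rfl⟩ : ∃ D, d = D + 1 := ⟨d - 1, by omega⟩
  rw [RSR.rho_target]
  set c : ℝ := (((D + 1 : ℕ) : ℝ) - n) / (((D + 1 : ℕ) : ℝ) * n - 1) with hc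
  have e0 : (⟨0, by omega⟩ : Fin (D + 1)) = 0 := rfl
  rw [e0]
  set o : Fin (D + 1) := ⟨1, by omega⟩ with ho
  have hle : ∀ i : Fin (D + 1), i ≠ 0 → a i ≤ a o := by
    intro i hi
    apply hord
    rw [Fin.le_def]
    have : i.val ≠ 0 := fun h => hi (Fin.ext h)
    simp only [ho]; omega
  have h01 : a o ≤ a 0 := hord 0 o (Fin.zero_le _)
  rcases (ha o).eq_or_lt with h0 | hpos
  · have hz : ∀ i : Fin (D + 1), i ≠ 0 → a i = 0 := fun i hi =>
      le_antisymm ((hle i hi).trans h0.symm.le) (ha i)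
    have hA := RSR.ach_filter (RSR.pieceA (D + 1) n hd hn hnd.le) a ha
    rw [← h0]
    refine RSR.ach_mono hn hA ?_ ?_ ?_
    · intro i j hij; simp [hij]
    · intro i; simp
    · intro i j hij
      have : a i * a j = 0 := by
        by_cases hi : i = 0
        · rw [hz j (fun h => hij (hi.trans h.symm)), mul_zero]
        · rw [hz i hi, zero_mul]
      simp [this]
  · have hpos0 : 0 < a 0 := hpos.trans_le h01
    have hN := RSR.ach_filter (RSR.normalized D n hn (by omega) (a o / a 0) c (by positivity)
      ((div_le_one hpos0).2 h01) (by rw [hc]; push_cast; rfl)) a ha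
    have hc0 : 0 ≤ c := by
      have h1 : (n : ℝ) ≤ (D + 1 : ℕ) := by exact_mod_cast hnd.le
      have h2 : (1 : ℝ) ≤ n := by exact_mod_cast hn
      rw [hc]; apply div_nonneg
      · linarith
      · nlinarith
    have key : ∀ x y : ℝ, 0 ≤ x → 0 ≤ y → x ≤ a o → y ≤ a o →
        x * y * (c / (a o / a 0)) ≤ a 0 * a o * c := by
      intro x y hx hy hxo hyo
      have h1 : x * y ≤ a o * a o := mul_le_mul hxo hyo hy hpos.le
      calc x * y * (c / (a o / a 0)) ≤ a o * a o * (c / (a o / a 0)) :=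
            mul_le_mul_of_nonneg_right h1 (by positivity)
        _ = a 0 * a o * c := by field_simp
    refine RSR.ach_mono hn hN ?_ ?_ ?_
    · intro i j hij; simp [hij]
    · intro i
      simp only [if_true]
      by_cases hi : i = 0
      · subst hi
        simp only [if_true]
        apply le_of_eq
        field_simp
      · simp only [hi, if_false]
        have := key (a i) (a i) (ha i) (ha i) (hle i hi) (hle i hi)
        linarith
    · intro i j hij
      by_cases hi : i = 0
      · subst hi
        simp only [true_or, if_true]
        have := hle j (fun h => hij h.symm)
        gcongr
      · by_cases hj : j = 0
        · subst hj
          simp only [or_true, if_true]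
          rw [mul_comm (a i)]
          have := hle i hi
          gcongr
        · simp only [hi, hj, or_self, if_false]
          exact key _ _ (ha i) (ha j) (hle i hi) (hle j hj)
end

section
/- Distillability criterion: let d ≥ 3, let ρ be a positive semidefinite matrix on ℂ^d ⊗ ℂ^d with Tr ρ = 1, and let ψ be a unit vector with ρ^{T_B} ψ = λψ for a real λ. Let a_1 ≥ a_2 be the two largest singular values of the d×d matrix M_ψ. If λ < −a_1 a_2 (d−2)/(2d−1), then there exists a nonzero vector φ in ℂ^d ⊗ ℂ^d of Schmidt rank at most 2 such that φ† ρ^{T_B} φ < 0 (i.e. ρ is 1-distillable). -/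
open Matrix BigOperators Kronecker ComplexOrder

/-- The partial transpose on the second factor: `(ρ^{T_B})_{(i,j),(k,l)} = ρ_{(i,l),(k,j)}`. -/
noncomputable def ptB (d : ℕ) (ρ : Matrix (Fin d × Fin d) (Fin d × Fin d) ℂ) :
    Matrix (Fin d × Fin d) (Fin d × Fin d) ℂ :=
  Matrix.of fun p q => ρ (p.1, q.2) (q.1, p.2)

/-- The singular values of a d×d complex matrix (in no particular order):
square roots of the eigenvalues of `MᴴM`. -/
noncomputable def singVals (d : ℕ) (M : Matrix (Fin d) (Fin d) ℂ) : Fin d → ℝ :=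
  fun i => Real.sqrt ((Matrix.posSemidef_conjTranspose_mul_self M).1.eigenvalues i)


/-- real part of the sesquilinear form -/
noncomputable def Qf {n : Type*} [Fintype n] (W : Matrix n n ℂ) (v : n → ℂ) : ℝ :=
  (star v ⬝ᵥ W.mulVec v).re

lemma Qf_eq {n : Type*} [Fintype n] (W : Matrix n n ℂ) (v : n → ℂ) :
    Qf W v = (∑ p, ∑ q, (star (v p) * v q) * W p q).re := by
  unfold Qf
  simp only [dotProduct, mulVec, Finset.mul_sum, Pi.star_apply]
  congr 1
  refine Finset.sum_congr rfl fun p _ => Finset.sum_congr rfl fun q _ => by ring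

lemma Qf_gram {n G : Type*} [Fintype n] [Fintype G] (W : Matrix n n ℂ) (t : G → n → ℂ) :
    ∑ g, Qf W (t g) = (∑ p, ∑ q, (∑ g, star (t g p) * t g q) * W p q).re := by
  simp only [Qf_eq]
  rw [← Complex.re_sum]
  congr 1
  rw [Finset.sum_comm]
  refine Finset.sum_congr rfl fun p _ => ?_
  rw [Finset.sum_comm]
  refine Finset.sum_congr rfl fun q _ => ?_
  rw [Finset.sum_mul]

lemma Qf_smul {n : Type*} [Fintype n] (W : Matrix n n ℂ) (c : ℝ) (v : n → ℂ) :
    Qf W ((c : ℂ) • v) = c ^ 2 * Qf W v := by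
  unfold Qf
  rw [mulVec_smul, star_smul, smul_dotProduct, dotProduct_smul]
  simp
  ring

lemma Qf_pairs {n K : Type*} [Fintype n] [Fintype K] (W : Matrix n n ℂ) (t : K → n → ℂ) :
    ∑ k, ∑ l, Qf W (t k + t l) =
      2 * (Fintype.card K : ℝ) * ∑ k, Qf W (t k) + 2 * Qf W (∑ k, t k) := by
  have h : ∀ k l, Qf W (t k + t l) = Qf W (t k) + Qf W (t l)
      + ((star (t k) ⬝ᵥ W.mulVec (t l)).re + (star (t l) ⬝ᵥ W.mulVec (t k)).re) := by
    intro k l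
    simp only [Qf, star_add, mulVec_add, add_dotProduct, dotProduct_add, Complex.add_re]
    ring
  have h2 : Qf W (∑ k, t k) = ∑ k, ∑ l, (star (t k) ⬝ᵥ W.mulVec (t l)).re := by
    unfold Qf
    rw [star_sum, sum_dotProduct, Complex.re_sum]
    refine Finset.sum_congr rfl fun k _ => ?_
    rw [← Complex.re_sum, ← dotProduct_sum]
    congr 2
    exact map_sum (Matrix.mulVecLin W) t Finset.univ
  simp only [h, Finset.sum_add_distrib, Finset.sum_const, Finset.card_univ, nsmul_eq_mul,
    ← Finset.mul_sum]
  rw [h2, Finset.sum_comm (f := fun k l => (star (t l) ⬝ᵥ W.mulVec (t k)).re)]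
  ring

/-- diagonal vector -/
noncomputable def dg (d : ℕ) (a : Fin d → ℝ) : Fin d × Fin d → ℂ :=
  fun p => if p.1 = p.2 then (a p.1 : ℂ) else 0

lemma char_sum (d : ℕ) (i j k l : Fin d) :
    ∑ g : Fin d → ZMod 3, ZMod.stdAddChar (-g i + g j + g k - g l) =
      if (i = j ∧ k = l) ∨ (i = k ∧ j = l) then (3 : ℂ) ^ d else 0 := by
  let χ : AddChar (Fin d → ZMod 3) ℂ :=
    { toFun := fun g => ZMod.stdAddChar (-g i + g j + g k - g l)
      map_zero_eq_one' := by simp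
      map_add_eq_mul' := by
        intro x y
        rw [← AddChar.map_add_eq_mul]
        congr 1
        simp only [Pi.add_apply]
        ring }
  split_ifs with h
  · have : ∀ g : Fin d → ZMod 3, (-g i + g j + g k - g l) = 0 := by
      intro g
      rcases h with ⟨rfl, rfl⟩ | ⟨rfl, rfl⟩ <;> ring
    simp [this]
  · have hne : χ ≠ 1 := by
      intro h1
      have key : ∀ g : Fin d → ZMod 3, -g i + g j + g k - g l = 0 := by
        intro g
        have : χ g = 1 := by rw [h1]; rfl
        have h3 : (ZMod.stdAddChar (-g i + g j + g k - g l) : ℂ) = ZMod.stdAddChar (0 : ZMod 3) := by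
          rw [AddChar.map_zero_eq_one]; exact this
        exact ZMod.injective_stdAddChar h3
      apply h
      by_cases h1 : i = j
      · left
        refine ⟨h1, ?_⟩
        by_contra h2
        have := key (Pi.single k 1)
        rw [h1] at this
        simp [Pi.single_apply, Ne.symm h2] at this
      · right
        have ki := key (Pi.single i 1)
        have hk : i = k := by
          by_contra h2
          by_cases h3 : l = i
          · simp [Pi.single_apply, Ne.symm h1, Ne.symm h2, h3] at ki
            revert ki; decide
          · simp [Pi.single_apply, Ne.symm h1, Ne.symm h2, h3] at ki
        refine ⟨hk, ?_⟩
        by_contra h2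
        have := key (Pi.single j 1)
        simp [Pi.single_apply, ← hk, h1, Ne.symm h2] at this
    exact AddChar.sum_eq_zero_of_ne_one hne

lemma twirl (d : ℕ) (W : Matrix (Fin d × Fin d) (Fin d × Fin d) ℂ) (a : Fin d → ℝ)
    (ha : ∀ i, 0 ≤ a i) (x : Fin d → ℂ) (hx : ∀ i, star (x i) * x i = 1) :
    ∑ g : Fin d → ZMod 3, Qf W (fun p =>
        (√(a p.1) * (x p.1 * ZMod.stdAddChar (g p.1))) *
        (√(a p.2) * star (x p.2 * ZMod.stdAddChar (g p.2)))) =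
      3 ^ d * (Qf W (dg d a) + ∑ i, ∑ j, if i = j then 0 else a i * a j * (W (i, j) (i, j)).re) := by
  have hG : ∀ p q : Fin d × Fin d, ∑ g : Fin d → ZMod 3,
      star ((√(a p.1) * (x p.1 * ZMod.stdAddChar (g p.1))) *
        (√(a p.2) * star (x p.2 * ZMod.stdAddChar (g p.2)))) *
      ((√(a q.1) * (x q.1 * ZMod.stdAddChar (g q.1))) *
        (√(a q.2) * star (x q.2 * ZMod.stdAddChar (g q.2)))) =
      (3 : ℂ) ^ d * (star (dg d a p) * dg d a q
        + if p = q then (if p.1 = p.2 then 0 else (a p.1 * a p.2 : ℂ)) else 0) := by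
    rintro ⟨i, j⟩ ⟨k, l⟩
    have e1 : ∀ g : Fin d → ZMod 3, star ((√(a i) * (x i * ZMod.stdAddChar (g i))) *
        (√(a j) * star (x j * ZMod.stdAddChar (g j)))) *
      ((√(a k) * (x k * ZMod.stdAddChar (g k))) *
        (√(a l) * star (x l * ZMod.stdAddChar (g l)))) =
        (√(a i) * √(a j) * √(a k) * √(a l) * (star (x i) * x j * x k * star (x l)) : ℂ) *
          ZMod.stdAddChar (-g i + g j + g k - g l) := by
      intro g
      have : (ZMod.stdAddChar (-g i + g j + g k - g l) : ℂ) =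
        star (ZMod.stdAddChar (g i)) * ZMod.stdAddChar (g j) * ZMod.stdAddChar (g k) *
          star (ZMod.stdAddChar (g l)) := by
        rw [sub_eq_add_neg, AddChar.map_add_eq_mul, AddChar.map_add_eq_mul, AddChar.map_add_eq_mul,
          AddChar.map_neg_eq_conj, AddChar.map_neg_eq_conj]
        rfl
      rw [this]
      simp only [star_mul', star_star, RCLike.star_def, Complex.conj_ofReal, RingHomCompTriple.comp_apply, RingHom.id_apply]
      ring
    simp only [e1]
    rw [← Finset.mul_sum, char_sum]
    have hs : ∀ i, (√(a i) : ℂ) * √(a i) = a i := by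
      intro i; rw [← Complex.ofReal_mul, Real.mul_self_sqrt (ha i)]
    have hx' : ∀ i, (starRingEnd ℂ) (x i) * x i = 1 := hx
    simp only [dg, Prod.mk.injEq]
    by_cases h1 : i = j ∧ k = l
    · obtain ⟨rfl, rfl⟩ := h1
      simp
      calc _ = ((√(a i) : ℂ) * √(a i)) * ((√(a k) : ℂ) * √(a k)) * ((starRingEnd ℂ (x i)) * x i) * ((starRingEnd ℂ (x k)) * x k) * 3 ^ d := by ring
        _ = _ := by rw [hs, hs, hx' i, hx' k]; ring
    · by_cases h2 : i = k ∧ j = l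
      · obtain ⟨rfl, rfl⟩ := h2
        have hij : i ≠ j := fun h => h1 ⟨h, h⟩
        simp [hij]
        calc _ = ((√(a i) : ℂ) * √(a i)) * ((√(a j) : ℂ) * √(a j)) * ((starRingEnd ℂ (x i)) * x i) * ((starRingEnd ℂ (x j)) * x j) * 3 ^ d := by ring
          _ = _ := by
            rw [hs, hs, hx' i, hx' j]; ring
      · rw [if_neg (by tauto), if_neg h2]
        by_cases h3 : i = j
        · have : k ≠ l := fun h => h1 ⟨h3, h⟩
          simp [this]
        · simp [h3]
  rw [Qf_gram]
  simp only [hG]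
  rw [Qf_eq]
  have : (3 : ℝ) ^ d = ((3 : ℂ) ^ d).re := by
    have : (3 : ℂ) ^ d = ((3 ^ d : ℝ) : ℂ) := by push_cast; rfl
    rw [this, Complex.ofReal_re]
  have h3 : ∀ z : ℂ, ((3 : ℂ) ^ d * z).re = 3 ^ d * z.re := by
    intro z
    have : (3 : ℂ) ^ d = ((3 ^ d : ℝ) : ℂ) := by push_cast; rfl
    rw [this, Complex.re_ofReal_mul]
  simp only [mul_assoc ((3 : ℂ) ^ d), ← Finset.mul_sum]
  rw [h3]
  congr 1
  simp only [add_mul, Finset.sum_add_distrib, Complex.add_re]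
  congr 1
  simp only [ite_mul, zero_mul, Finset.sum_ite_eq, Finset.mem_univ, if_true]
  rw [Fintype.sum_prod_type]
  simp only [Complex.re_sum]
  refine Finset.sum_congr rfl fun i _ => Finset.sum_congr rfl fun j _ => ?_
  split_ifs
  · simp
  · rw [← Complex.ofReal_mul, Complex.re_ofReal_mul]

lemma Qf_pairs_nonneg {n K : Type*} [Fintype n] [Fintype K] (W : Matrix n n ℂ) (t : K → n → ℂ)
    (ht : ∀ k l, 0 ≤ Qf W (t k + t l)) :
    0 ≤ (2 * (Fintype.card K : ℝ) - 4) * ∑ k, Qf W (t k) + 2 * Qf W (∑ k, t k) := by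
  have h1 := Qf_pairs W t
  have h2 : ∀ k, 4 * Qf W (t k) = Qf W (t k + t k) := by
    intro k
    have : t k + t k = ((2 : ℝ) : ℂ) • t k := by
      push_cast; rw [two_smul]
    rw [this, Qf_smul]; norm_num
  have h3 : ∑ k, 4 * Qf W (t k) ≤ ∑ k, ∑ l, Qf W (t k + t l) := by
    refine Finset.sum_le_sum fun k _ => ?_
    rw [h2]
    exact Finset.single_le_sum (f := fun l => Qf W (t k + t l)) (fun l _ => ht k l) (Finset.mem_univ k)
  rw [← Finset.mul_sum] at h3
  linarith

lemma dft_sum (d : ℕ) [NeZero d] (i j : Fin d) :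
    ∑ k : ZMod d, (ZMod.stdAddChar (k * (i.val : ZMod d)) : ℂ) *
      star (ZMod.stdAddChar (k * (j.val : ZMod d)) : ℂ) = if i = j then (d : ℂ) else 0 := by
  have h := AddChar.sum_mulShift ((i.val : ZMod d) - (j.val : ZMod d)) (ZMod.isPrimitive_stdAddChar d)
  have e : ∀ k : ZMod d, (ZMod.stdAddChar (k * (i.val : ZMod d)) : ℂ) *
      star (ZMod.stdAddChar (k * (j.val : ZMod d)) : ℂ) =
      ZMod.stdAddChar (k * ((i.val : ZMod d) - (j.val : ZMod d))) := by
    intro k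
    rw [mul_sub, sub_eq_add_neg, AddChar.map_add_eq_mul, AddChar.map_neg_eq_conj]
    rfl
  simp only [e]
  rw [h]
  have hiff : ((i.val : ZMod d) - (j.val : ZMod d) = 0) ↔ i = j := by
    rw [sub_eq_zero, ZMod.natCast_eq_natCast_iff', Nat.mod_eq_of_lt i.2, Nat.mod_eq_of_lt j.2, Fin.ext_iff]
  by_cases hij : i = j
  · rw [if_pos (hiff.mpr hij), if_pos hij, ZMod.card]
  · rw [if_neg (fun h => hij (hiff.mp h)), if_neg hij]; simp

lemma unit_char {N : ℕ} [NeZero N] (z : ZMod N) :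
    star (ZMod.stdAddChar z : ℂ) * (ZMod.stdAddChar z : ℂ) = 1 := by
  have : star (ZMod.stdAddChar z : ℂ) = ZMod.stdAddChar (-z) := by
    rw [AddChar.map_neg_eq_conj]; rfl
  rw [this, ← AddChar.map_add_eq_mul]
  simp

lemma proj_part (d : ℕ) (hd : 3 ≤ d) (W : Matrix (Fin d × Fin d) (Fin d × Fin d) ℂ)
    (H : ∀ x y z w : Fin d → ℂ, 0 ≤ Qf W (fun p => x p.1 * y p.2 + z p.1 * w p.2))
    (a : Fin d → ℝ) (ha : ∀ i, 0 ≤ a i) :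
    0 ≤ (2 * (d : ℝ) - 2) * Qf W (dg d a) +
      ((d : ℝ) - 2) * ∑ i, ∑ j, if i = j then 0 else a i * a j * (W (i, j) (i, j)).re := by
  haveI : NeZero d := ⟨by omega⟩
  set S := ∑ i, ∑ j, if i = j then 0 else a i * a j * (W (i, j) (i, j)).re with hS
  let t : ZMod d → (Fin d → ZMod 3) → Fin d × Fin d → ℂ := fun k g p =>
        (√(a p.1) * (ZMod.stdAddChar (k * (p.1.val : ZMod d)) * ZMod.stdAddChar (g p.1))) *
        (√(a p.2) * star (ZMod.stdAddChar (k * (p.2.val : ZMod d)) * ZMod.stdAddChar (g p.2)))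
  have hsum : ∀ g, ∑ k, t k g = ((d : ℝ) : ℂ) • dg d a := by
    intro g
    ext ⟨i, j⟩
    rw [Finset.sum_apply]
    have e : ∀ k, t k g (i, j) = (√(a i) * √(a j) * ZMod.stdAddChar (g i) * star (ZMod.stdAddChar (g j) : ℂ)) *
       ((ZMod.stdAddChar (k * (i.val : ZMod d)) : ℂ) *
      star (ZMod.stdAddChar (k * (j.val : ZMod d)) : ℂ)) := by
      intro k
      simp only [t, star_mul']
      ring
    simp only [e]
    rw [← Finset.mul_sum, dft_sum]
    simp only [Pi.smul_apply, dg, smul_eq_mul]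
    by_cases h : i = j
    · subst h
      simp only [if_true]
      have h1 : (√(a i) : ℂ) * √(a i) = a i := by
        rw [← Complex.ofReal_mul, Real.mul_self_sqrt (ha i)]
      calc _ = ((√(a i) : ℂ) * √(a i)) * (star (ZMod.stdAddChar (g i) : ℂ) * ZMod.stdAddChar (g i)) * d := by ring
        _ = _ := by rw [h1, unit_char]; push_cast; ring
    · simp [h]
  have hg : ∀ g, 0 ≤ (2 * (d : ℝ) - 4) * ∑ k, Qf W (t k g) + 2 * (d : ℝ) ^ 2 * Qf W (dg d a) := by
    intro g
    have h1 := Qf_pairs_nonneg W (fun k => t k g) (fun k l => H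
      (fun i => √(a i) * (ZMod.stdAddChar (k * (i.val : ZMod d)) * ZMod.stdAddChar (g i)))
      (fun i => √(a i) * star (ZMod.stdAddChar (k * (i.val : ZMod d)) * ZMod.stdAddChar (g i)))
      (fun i => √(a i) * (ZMod.stdAddChar (l * (i.val : ZMod d)) * ZMod.stdAddChar (g i)))
      (fun i => √(a i) * star (ZMod.stdAddChar (l * (i.val : ZMod d)) * ZMod.stdAddChar (g i))))
    rw [hsum, Qf_smul, ZMod.card] at h1
    linarith
  have htw : ∀ k, ∑ g, Qf W (t k g) = 3 ^ d * (Qf W (dg d a) + S) := fun k =>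
    twirl d W a ha (fun i => ZMod.stdAddChar (k * (i.val : ZMod d))) (fun i => unit_char _)
  have htot : 0 ≤ ∑ g : Fin d → ZMod 3, ((2 * (d : ℝ) - 4) * ∑ k, Qf W (t k g) + 2 * (d : ℝ) ^ 2 * Qf W (dg d a)) :=
    Finset.sum_nonneg fun g _ => hg g
  rw [Finset.sum_add_distrib, ← Finset.mul_sum, Finset.sum_comm] at htot
  simp only [htw, Finset.sum_const, Finset.card_univ, Fintype.card_fun, ZMod.card, Fintype.card_fin,
    nsmul_eq_mul] at htot
  push_cast at htot
  have hpos : (0 : ℝ) < 2 * d * 3 ^ d := by positivity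
  have : 0 ≤ (2 * (d : ℝ) * 3 ^ d) * ((2 * (d : ℝ) - 2) * Qf W (dg d a) + ((d : ℝ) - 2) * S) := by
    refine htot.trans_eq ?_
    ring
  exact nonneg_of_mul_nonneg_right this hpos

lemma Qf_dg (d : ℕ) (W : Matrix (Fin d × Fin d) (Fin d × Fin d) ℂ) (a : Fin d → ℝ) :
    Qf W (dg d a) = ∑ i, ∑ j, a i * a j * (W (i, i) (j, j)).re := by
  rw [Qf_eq]
  simp only [Fintype.sum_prod_type, dg, apply_ite star, star_zero, ite_mul, mul_ite, zero_mul,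
    mul_zero]
  simp [Complex.re_sum, mul_assoc]

lemma pair_part (d : ℕ) (W : Matrix (Fin d × Fin d) (Fin d × Fin d) ℂ)
    (H : ∀ x y z w : Fin d → ℂ, 0 ≤ Qf W (fun p => x p.1 * y p.2 + z p.1 * w p.2))
    (a : Fin d → ℝ) (ha : ∀ i, 0 ≤ a i) :
    0 ≤ Qf W (dg d a) + ∑ i, a i * (∑ k, a k - 2 * a i) * (W (i, i) (i, i)).re := by
  let R : Fin d → Fin d → ℝ := fun i j => (W (i, i) (j, j)).re
  have hR : ∀ i j, 0 ≤ R i i + R j j + R i j + R j i := by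
    intro i j
    have h := H (Pi.single i 1) (Pi.single i 1) (Pi.single j 1) (Pi.single j 1)
    have e : (fun p : Fin d × Fin d => (Pi.single i 1 : Fin d → ℂ) p.1 * (Pi.single i 1 : Fin d → ℂ) p.2 +
        (Pi.single j 1 : Fin d → ℂ) p.1 * (Pi.single j 1 : Fin d → ℂ) p.2) =
        Pi.single (i, i) 1 + Pi.single (j, j) 1 := by
      ext ⟨k, l⟩
      simp only [Pi.single_apply, Pi.add_apply, Prod.mk.injEq]
      by_cases h1 : k = i <;> by_cases h2 : l = i <;> by_cases h3 : k = j <;> by_cases h4 : l = j <;>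
        simp [h1, h2, h3, h4]
    rw [e] at h
    have : Qf W (Pi.single (i, i) 1 + Pi.single (j, j) 1) = R i i + R j j + R i j + R j i := by
      simp only [Qf, star_add, mulVec_add, add_dotProduct, dotProduct_add, Complex.add_re, R,
        ← Pi.single_star, star_one, mulVec_single_one, single_one_dotProduct, Matrix.col_apply]
      ring
    linarith
  have h1 : ∑ i, 4 * (a i * a i * R i i) ≤ ∑ i, ∑ j, a i * a j * (R i i + R j j + R i j + R j i) := by
    refine Finset.sum_le_sum fun i _ => ?_
    calc 4 * (a i * a i * R i i) = a i * a i * (R i i + R i i + R i i + R i i) := by ring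
      _ ≤ _ := Finset.single_le_sum (f := fun j => a i * a j * (R i i + R j j + R i j + R j i))
        (fun j _ => mul_nonneg (mul_nonneg (ha i) (ha j)) (hR i j)) (Finset.mem_univ i)
  have h2 : ∑ i, ∑ j, a i * a j * (R i i + R j j + R i j + R j i) =
      2 * ((∑ k, a k) * ∑ i, a i * R i i) + 2 * Qf W (dg d a) := by
    rw [Qf_dg]
    have e1 : ∑ i, ∑ j, a i * a j * R i i = (∑ k, a k) * ∑ i, a i * R i i := by
      rw [Finset.sum_mul_sum, Finset.sum_comm]
      exact Finset.sum_congr rfl fun i _ => Finset.sum_congr rfl fun j _ => by ring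
    have e2 : ∑ i, ∑ j, a i * a j * R j j = (∑ k, a k) * ∑ i, a i * R i i := by
      rw [Finset.sum_mul_sum]
      exact Finset.sum_congr rfl fun i _ => Finset.sum_congr rfl fun j _ => by ring
    have e3 : ∑ i, ∑ j, a i * a j * R j i = ∑ i, ∑ j, a i * a j * R i j := by
      rw [Finset.sum_comm]
      exact Finset.sum_congr rfl fun i _ => Finset.sum_congr rfl fun j _ => by ring
    simp only [mul_add, Finset.sum_add_distrib]
    rw [e1, e2, e3]
    ring
  have h3 : ∑ i, a i * (∑ k, a k - 2 * a i) * (W (i, i) (i, i)).re =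
      (∑ k, a k) * ∑ i, a i * R i i - (1 / 2) * ∑ i, 4 * (a i * a i * R i i) := by
    rw [Finset.mul_sum, Finset.mul_sum, ← Finset.sum_sub_distrib]
    exact Finset.sum_congr rfl fun i _ => by simp only [R]; ring
  rw [h3]
  linarith

lemma core (d : ℕ) (hd : 3 ≤ d) (W : Matrix (Fin d × Fin d) (Fin d × Fin d) ℂ)
    (H : ∀ x y z w : Fin d → ℂ, 0 ≤ Qf W (fun p => x p.1 * y p.2 + z p.1 * w p.2))
    (a : Fin d → ℝ) (ha : ∀ i, 0 ≤ a i) (i j : Fin d) (hij : i ≠ j) (h21 : a j ≤ a i)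
    (hmax : ∀ k, k ≠ i → k ≠ j → a k ≤ a j) :
    0 ≤ (2 * (d : ℝ) - 1) * Qf W (dg d a) + ((d : ℝ) - 2) * (a i * a j) * W.trace.re := by
  have hp := proj_part d hd W H a ha
  have hq := pair_part d W H a ha
  have hd3 : (3 : ℝ) ≤ d := by exact_mod_cast hd
  have hle : ∀ k, k ≠ i → a k ≤ a j := by
    intro k hk
    by_cases h : k = j
    · rw [h]
    · exact hmax k hk h
  have hlei : ∀ k, a k ≤ a i := by
    intro k
    by_cases h : k = i
    · rw [h]
    · exact (hle k h).trans h21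
  have hW : ∀ k l, 0 ≤ (W (k, l) (k, l)).re := by
    intro k l
    have h := H (Pi.single k 1) (Pi.single l 1) 0 0
    have e : (fun p : Fin d × Fin d => (Pi.single k 1 : Fin d → ℂ) p.1 * (Pi.single l 1 : Fin d → ℂ) p.2 +
        (0 : Fin d → ℂ) p.1 * (0 : Fin d → ℂ) p.2) = Pi.single (k, l) 1 := by
      ext ⟨m, n⟩
      simp only [Pi.single_apply, Prod.mk.injEq, Pi.zero_apply]
      by_cases h1 : m = k <;> by_cases h2 : n = l <;> simp [h1, h2]
    rw [e] at h
    simpa only [Qf, ← Pi.single_star, star_one, mulVec_single_one, single_one_dotProduct,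
      Matrix.col_apply] using h
  have hoff : ∀ k l, k ≠ l → a k * a l ≤ a i * a j := by
    intro k l hkl
    by_cases h : k = i
    · subst h
      exact mul_le_mul_of_nonneg_left (hle l hkl.symm) (ha _)
    · rw [mul_comm (a i)]
      exact mul_le_mul (hle k h) (hlei l) (ha _) (ha _)
  have hdiag : ∀ k, a k * (∑ m, a m - 2 * a k) ≤ ((d : ℝ) - 2) * (a i * a j) := by
    have hA : ∑ m, a m = a i + ∑ m ∈ Finset.univ.erase i, a m :=
      (Finset.add_sum_erase _ _ (Finset.mem_univ i)).symm
    intro k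
    by_cases hk : k = i
    · subst hk
      have h1 : ∑ m ∈ Finset.univ.erase k, a m ≤ ((d : ℝ) - 1) * a j := by
        have := Finset.sum_le_card_nsmul (Finset.univ.erase k) a (a j)
          (fun m hm => hle m (Finset.ne_of_mem_erase hm))
        rw [Finset.card_erase_of_mem (Finset.mem_univ _), nsmul_eq_mul] at this
        simp only [Finset.card_univ, Fintype.card_fin] at this
        rw [Nat.cast_sub (by omega)] at this
        simpa using this
      have h2 : ∑ m, a m - 2 * a k ≤ ((d : ℝ) - 2) * a j := by rw [hA]; linarith
      calc _ ≤ a k * (((d : ℝ) - 2) * a j) := mul_le_mul_of_nonneg_left h2 (ha _)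
        _ = _ := by ring
    · have hA2 : ∑ m ∈ Finset.univ.erase i, a m = a k + ∑ m ∈ (Finset.univ.erase i).erase k, a m :=
        (Finset.add_sum_erase _ _ (Finset.mem_erase.mpr ⟨hk, Finset.mem_univ _⟩)).symm
      have h1 : ∑ m ∈ (Finset.univ.erase i).erase k, a m ≤ ((d : ℝ) - 2) * a j := by
        have := Finset.sum_le_card_nsmul ((Finset.univ.erase i).erase k) a (a j)
          (fun m hm => hle m (Finset.ne_of_mem_erase (Finset.mem_of_mem_erase hm)))
        rw [Finset.card_erase_of_mem (Finset.mem_erase.mpr ⟨hk, Finset.mem_univ _⟩),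
          Finset.card_erase_of_mem (Finset.mem_univ _), nsmul_eq_mul] at this
        simp only [Finset.card_univ, Fintype.card_fin] at this
        rw [Nat.sub_sub, Nat.cast_sub (by omega)] at this
        norm_num at this
        exact this
      have h2 : ∑ m, a m - 2 * a k ≤ a i + ((d : ℝ) - 2) * a j - a k := by rw [hA, hA2]; linarith
      have hkj := hle k hk
      have g1 : 0 ≤ (a j - a k) * (a i + ((d : ℝ) - 2) * a j - a j - a k) := by
        refine mul_nonneg (by linarith) ?_
        nlinarith [ha j, ha k]
      have g2 : 0 ≤ ((d : ℝ) - 3) * (a j * (a i - a j)) :=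
        mul_nonneg (by linarith) (mul_nonneg (ha _) (by linarith))
      calc _ ≤ a k * (a i + ((d : ℝ) - 2) * a j - a k) := mul_le_mul_of_nonneg_left h2 (ha _)
        _ ≤ _ := by linarith
  set c := ((d : ℝ) - 2) * (a i * a j) with hc
  have htr : W.trace.re = ∑ k, ∑ l, (W (k, l) (k, l)).re := by
    simp [Matrix.trace, Fintype.sum_prod_type, Complex.re_sum]
  have hsplit : ((d : ℝ) - 2) * (∑ k, ∑ l, if k = l then 0 else a k * a l * (W (k, l) (k, l)).re)
      + ∑ k, a k * (∑ m, a m - 2 * a k) * (W (k, k) (k, k)).re ≤ c * W.trace.re := by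
    rw [htr, Finset.mul_sum, Finset.mul_sum, ← Finset.sum_add_distrib]
    refine Finset.sum_le_sum fun k _ => ?_
    have e : a k * (∑ m, a m - 2 * a k) * (W (k, k) (k, k)).re =
        ∑ l, if k = l then a k * (∑ m, a m - 2 * a k) * (W (k, l) (k, l)).re else 0 := by
      simp
    rw [e, Finset.mul_sum, Finset.mul_sum, ← Finset.sum_add_distrib]
    refine Finset.sum_le_sum fun l _ => ?_
    by_cases h : k = l
    · subst h
      simp only [if_true, mul_zero, zero_add]
      exact mul_le_mul_of_nonneg_right (hdiag k) (hW _ _)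
    · simp only [if_neg h, add_zero]
      rw [← mul_assoc]
      refine mul_le_mul_of_nonneg_right ?_ (hW _ _)
      exact mul_le_mul_of_nonneg_left (hoff k l h) (by linarith)
  linarith

lemma svd_exists (d : ℕ) (M : Matrix (Fin d) (Fin d) ℂ) :
    ∃ E V : Matrix (Fin d) (Fin d) ℂ, E ∈ unitary (Matrix (Fin d) (Fin d) ℂ) ∧
      V ∈ unitary (Matrix (Fin d) (Fin d) ℂ) ∧
      M = E * diagonal (fun k => (singVals d M k : ℂ)) * Vᴴ := by
  set hH := (Matrix.posSemidef_conjTranspose_mul_self M).1 with hHdef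
  have hV := hH.eigenvectorUnitary.2
  set V : Matrix (Fin d) (Fin d) ℂ := hH.eigenvectorUnitary.1 with hVdef
  have hnn : ∀ k, 0 ≤ hH.eigenvalues k := fun k => Matrix.eigenvalues_conjTranspose_mul_self_nonneg M k
  have hσ : ∀ k, singVals d M k * singVals d M k = hH.eigenvalues k := fun k =>
    Real.mul_self_sqrt (hnn k)
  set σ := singVals d M with hσdef
  have hVV : Vᴴ * V = 1 := (Unitary.mem_iff.mp hV).1
  have hVV' : V * Vᴴ = 1 := (Unitary.mem_iff.mp hV).2
  have hdiag : (M * V)ᴴ * (M * V) = diagonal (fun k => (hH.eigenvalues k : ℂ)) := by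
    have hs := hH.spectral_theorem
    rw [Unitary.conjStarAlgAut_apply] at hs
    change Mᴴ * M = V * diagonal (fun k => (hH.eigenvalues k : ℂ)) * Vᴴ at hs
    calc (M * V)ᴴ * (M * V) = Vᴴ * (Mᴴ * M) * V := by
          rw [conjTranspose_mul]; simp only [Matrix.mul_assoc]
      _ = (Vᴴ * V) * diagonal (fun k => (hH.eigenvalues k : ℂ)) * (Vᴴ * V) := by
          refine (congrArg (fun A => Vᴴ * A * V) hs).trans ?_
          simp only [Matrix.mul_assoc]
      _ = _ := by rw [hVV]; simp
  let w : Fin d → EuclideanSpace ℂ (Fin d) := fun k =>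
    WithLp.toLp 2 (fun i => ((σ k)⁻¹ : ℂ) * (M * V) i k)
  have hcol : ∀ k l, ∑ i, star ((M * V) i k) * (M * V) i l =
      if k = l then (hH.eigenvalues k : ℂ) else 0 := by
    intro k l
    have := congrFun (congrFun hdiag k) l
    rw [Matrix.mul_apply, diagonal_apply] at this
    simpa only [conjTranspose_apply] using this
  have hinner : ∀ k l, inner ℂ (w k) (w l) = ((σ k)⁻¹ * (σ l)⁻¹ : ℂ) *
      if k = l then (hH.eigenvalues k : ℂ) else 0 := by
    intro k l
    rw [← hcol, PiLp.inner_apply, Finset.mul_sum]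
    refine Finset.sum_congr rfl fun i _ => ?_
    simp [w]
    ring
  have hon : Orthonormal ℂ (Set.domRestrict {k | σ k ≠ 0} w) := by
    rw [orthonormal_iff_ite]
    rintro ⟨k, hk⟩ ⟨l, hl⟩
    simp only [Set.mem_setOf_eq] at hk hl
    change inner ℂ (w k) (w l) = _
    rw [hinner]
    by_cases h : k = l
    · subst h
      have : (σ k : ℂ) ≠ 0 := by exact_mod_cast hk
      simp only [if_true]
      rw [← hσ]
      push_cast
      field_simp
    · simp [h]
  obtain ⟨b, hb⟩ := hon.exists_orthonormalBasis_extension_of_card_eq (by simp)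
  let E : Matrix (Fin d) (Fin d) ℂ := Matrix.of fun i k => b k i
  have hEE : Eᴴ * E = 1 := by
    ext k l
    rw [Matrix.mul_apply, Matrix.one_apply]
    have := orthonormal_iff_ite.mp b.orthonormal k l
    rw [← this, PiLp.inner_apply]
    refine Finset.sum_congr rfl fun i _ => ?_
    simp [E]
    ring
  have hE : E ∈ unitary (Matrix (Fin d) (Fin d) ℂ) :=
    Unitary.mem_iff.mpr ⟨hEE, mul_eq_one_comm.mp hEE⟩
  refine ⟨E, V, hE, hV, ?_⟩
  have hMV : M * V = E * diagonal (fun k => (σ k : ℂ)) := by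
    ext i k
    rw [Matrix.mul_diagonal]
    by_cases hk : σ k = 0
    · have h0 := hcol k k
      rw [if_pos rfl, ← hσ, hk] at h0
      have h1 : ∑ i, ‖(M * V) i k‖ ^ 2 = 0 := by
        have : ((∑ i, ‖(M * V) i k‖ ^ 2 : ℝ) : ℂ) = 0 := by
          rw [Complex.ofReal_sum]
          rw [← (by simpa using h0 : ∑ i, star ((M * V) i k) * (M * V) i k = 0)]
          refine Finset.sum_congr rfl fun i _ => ?_
          rw [RCLike.star_def, Complex.conj_mul']
          push_cast; rfl
        exact_mod_cast this
      have h2 := (Finset.sum_eq_zero_iff_of_nonneg (fun i _ => by positivity)).mp h1 i (Finset.mem_univ _)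
      have h3 : (M * V) i k = 0 := by simpa using h2
      rw [h3, hk]; simp
    · have : (σ k : ℂ) ≠ 0 := by exact_mod_cast hk
      simp only [E, Matrix.of_apply]
      rw [hb k hk]
      simp only [w]
      field_simp
  rw [← hMV, Matrix.mul_assoc, hVV', Matrix.mul_one]

lemma rank_two (d : ℕ) (x y z w : Fin d → ℂ) :
    (toMat d (fun p => x p.1 * y p.2 + z p.1 * w p.2)).rank ≤ 2 := by
  have : toMat d (fun p => x p.1 * y p.2 + z p.1 * w p.2) =
      (Matrix.of fun i (k : Fin 2) => if k = 0 then x i else z i) *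
      (Matrix.of fun (k : Fin 2) j => if k = 0 then y j else w j) := by
    ext i j
    simp [toMat, Matrix.mul_apply, Fin.sum_univ_two]
  rw [this]
  refine (Matrix.rank_mul_le_left _ _).trans ?_
  simpa using Matrix.rank_le_card_width (Matrix.of fun (i : Fin d) (k : Fin 2) => if k = 0 then x i else z i)

/-- Distillability criterion: if `ρ^{T_B}` has an eigenvector `ψ` with eigenvalue
`λ < -a₁a₂(d-2)/(2d-1)`, where `a₁ ≥ a₂` are the two largest singular values of `M_ψ`,
then `ρ` is 1-distillable. -/
theorem distillability_criterion (d : ℕ) (hd : 3 ≤ d)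
    (ρ : Matrix (Fin d × Fin d) (Fin d × Fin d) ℂ) (hρ : ρ.PosSemidef) (htr : ρ.trace = 1)
    (ψ : Fin d × Fin d → ℂ) (hψ : ∑ p, ‖ψ p‖ ^ 2 = 1)
    (l : ℝ) (heig : (ptB d ρ).mulVec ψ = ((l : ℝ) : ℂ) • ψ)
    (i j : Fin d) (hij : i ≠ j) (a₁ a₂ : ℝ)
    (ha₁ : a₁ = singVals d (toMat d ψ) i) (ha₂ : a₂ = singVals d (toMat d ψ) j)
    (h21 : a₂ ≤ a₁) (hmax : ∀ k, k ≠ i → k ≠ j → singVals d (toMat d ψ) k ≤ a₂)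
    (hl : l < -(a₁ * a₂ * ((d : ℝ) - 2) / (2 * (d : ℝ) - 1))) :
    ∃ φ : Fin d × Fin d → ℂ, φ ≠ 0 ∧ (toMat d φ).rank ≤ 2 ∧
      (star φ ⬝ᵥ (ptB d ρ).mulVec φ).re < 0 := by
  by_contra hcon
  push Not at hcon
  set W := ptB d ρ with hW
  have hd3 : (3 : ℝ) ≤ d := by exact_mod_cast hd
  have H : ∀ x y z w : Fin d → ℂ, 0 ≤ Qf W (fun p => x p.1 * y p.2 + z p.1 * w p.2) := by
    intro x y z w
    by_cases h0 : (fun p : Fin d × Fin d => x p.1 * y p.2 + z p.1 * w p.2) = 0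
    · rw [h0]; simp [Qf]
    · exact hcon _ h0 (rank_two d x y z w)
  obtain ⟨E, V, hE, hV, hM⟩ := svd_exists d (toMat d ψ)
  set σ := singVals d (toMat d ψ) with hσ
  let T : Matrix (Fin d × Fin d) (Fin d × Fin d) ℂ := E ⊗ₖ (V.map star)
  have hV' : V.map star ∈ unitary (Matrix (Fin d) (Fin d) ℂ) := by
    have h2 : Vᴴ * V = 1 := (Unitary.mem_iff.mp hV).1
    have h3 : (V.map star)ᴴ * (V.map star) = 1 := by
      have h4 := congrArg (fun A : Matrix (Fin d) (Fin d) ℂ => A.map (starRingEnd ℂ)) h2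
      simp only [Matrix.map_mul] at h4
      rw [Matrix.map_one _ (map_zero _) (map_one _)] at h4
      rw [← h4]
      rfl
    exact Unitary.mem_iff.mpr ⟨h3, mul_eq_one_comm.mp h3⟩
  have hT : T ∈ unitary (Matrix (Fin d × Fin d) (Fin d × Fin d) ℂ) :=
    Matrix.kronecker_mem_unitary hE hV'
  have hTT : T * Tᴴ = 1 := (Unitary.mem_iff.mp hT).2
  let W' := Tᴴ * W * T
  have hQ : ∀ v, Qf W' v = Qf W (T *ᵥ v) := by
    intro v
    simp only [Qf, W']
    rw [star_mulVec, ← dotProduct_mulVec, mulVec_mulVec, mulVec_mulVec, Matrix.mul_assoc]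
  have hTprod : ∀ x y z w : Fin d → ℂ, T *ᵥ (fun p => x p.1 * y p.2 + z p.1 * w p.2) =
      fun p => (E *ᵥ x) p.1 * (V.map star *ᵥ y) p.2 + (E *ᵥ z) p.1 * (V.map star *ᵥ w) p.2 := by
    intro x y z w
    ext ⟨m, n⟩
    simp only [T, mulVec, dotProduct, Fintype.sum_prod_type, kroneckerMap_apply, Finset.sum_mul_sum,
      ← Finset.sum_add_distrib]
    exact Finset.sum_congr rfl fun i _ => Finset.sum_congr rfl fun j _ => by ring
  have H' : ∀ x y z w : Fin d → ℂ, 0 ≤ Qf W' (fun p => x p.1 * y p.2 + z p.1 * w p.2) := by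
    intro x y z w
    rw [hQ, hTprod]
    exact H _ _ _ _
  have hTψ : T *ᵥ (dg d σ) = ψ := by
    ext ⟨m, n⟩
    have h1 : ψ (m, n) = toMat d ψ m n := rfl
    rw [h1, hM, Matrix.mul_apply]
    simp only [Matrix.mul_diagonal, T, mulVec, dotProduct, Fintype.sum_prod_type, kroneckerMap_apply,
      dg, mul_ite, mul_zero, Finset.sum_ite_eq, Finset.mem_univ, if_true, conjTranspose_apply,
      Matrix.map_apply]
    exact Finset.sum_congr rfl fun i _ => by ring
  have hc := core d hd W' H' σ (fun k => Real.sqrt_nonneg _) i j hij (by rw [← ha₁, ← ha₂]; exact h21)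
    (by rw [← ha₂]; exact hmax)
  have htr' : W'.trace = 1 := by
    rw [Matrix.trace_mul_comm, ← Matrix.mul_assoc, hTT, Matrix.one_mul, ← htr]
    rfl
  have hQψ : Qf W ψ = l := by
    simp only [Qf]
    rw [heig, dotProduct_smul]
    have : star ψ ⬝ᵥ ψ = 1 := by
      have h1 : star ψ ⬝ᵥ ψ = ((∑ p, ‖ψ p‖ ^ 2 : ℝ) : ℂ) := by
        rw [Complex.ofReal_sum]
        refine Finset.sum_congr rfl fun p _ => ?_
        rw [Pi.star_apply, RCLike.star_def, Complex.conj_mul']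
        push_cast; rfl
      rw [h1, hψ]; simp
    rw [this]; simp
  rw [hQ, hTψ, hQψ, htr', ← ha₁, ← ha₂, Complex.one_re, mul_one] at hc
  have hpos : (0 : ℝ) < 2 * d - 1 := by linarith
  have h5 : l * (2 * d - 1) < -(a₁ * a₂ * ((d : ℝ) - 2)) := by
    rw [← neg_div] at hl
    exact (lt_div_iff₀ hpos).mp hl
  linarith
end

section
/- Consider the 9×9 matrix ρ on ℂ³ ⊗ ℂ³ (basis ordered 00,01,02,10,11,12,20,21,22) given by ρ = (1/16)·[diagonal entries 1,2,2,2,1,2,2,2,2; off-diagonal entries ρ_{01,10} = ρ_{10,01} = −1/16, ρ_{02,20} = ρ_{20,02} = 2/16, ρ_{12,21} = ρ_{21,12} = 2/16; all other entries zero]. Then: (a) ρ is a density matrix satisfying the reduction criterion, i.e. 𝟙 ⊗ ρ_B − ρ and ρ_A ⊗ 𝟙 − ρ are both positive semidefinite; (b) the unit vector ψ = (|00⟩ + |11⟩ − |22⟩)/√3 satisfies ρ^{T_B} ψ = −(1/8) ψ; and (c) there exists a nonzero vector φ of Schmidt rank at most 2 with φ† ρ^{T_B} φ < 0, so ρ is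 1-distillable. -/
open Matrix BigOperators Kronecker ComplexOrder

/-- The explicit 9×9 example state on ℂ³ ⊗ ℂ³. -/
noncomputable def rho17 : Matrix (Fin 3 × Fin 3) (Fin 3 × Fin 3) ℂ :=
  Matrix.of fun p q =>
    (1 / 16 : ℂ) *
      (if p = q then (if p = (0, 0) ∨ p = (1, 1) then 1 else 2)
       else if (p = (0, 1) ∧ q = (1, 0)) ∨ (p = (1, 0) ∧ q = (0, 1)) then -1
       else if (p = (0, 2) ∧ q = (2, 0)) ∨ (p = (2, 0) ∧ q = (0, 2)) then 2
       else if (p = (1, 2) ∧ q = (2, 1)) ∨ (p = (2, 1) ∧ q = (1, 2)) then 2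
       else 0)

/-- Reduced density matrix on the first factor. -/
noncomputable def rhoA17 : Matrix (Fin 3) (Fin 3) ℂ :=
  Matrix.of fun i k => ∑ j, rho17 (i, j) (k, j)

/-- Reduced density matrix on the second factor. -/
noncomputable def rhoB17 : Matrix (Fin 3) (Fin 3) ℂ :=
  Matrix.of fun j l => ∑ i, rho17 (i, j) (i, l)

/-- The vector `ψ = (|00⟩ + |11⟩ - |22⟩)/√3`. -/
noncomputable def psi17 : Fin 3 × Fin 3 → ℂ := fun p =>
  ((if p = (0, 0) then 1 else 0) + (if p = (1, 1) then 1 else 0) -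
      (if p = (2, 2) then 1 else 0)) / ((Real.sqrt 3 : ℝ) : ℂ)

def ev17 (p q : Fin 3 × Fin 3) (s : ℂ) : Fin 3 × Fin 3 → ℂ := fun r =>
  if r = p then 1 else if r = q then s else 0

theorem psd17 (d : Matrix (Fin 3) (Fin 3) ℕ) (s t : ℂ) :
    ((1 / 16 : ℂ) • (Matrix.diagonal (fun p : Fin 3 × Fin 3 => ((d p.1 p.2 : ℕ) : ℂ)) +
      vecMulVec (ev17 (0,1) (1,0) s) (star (ev17 (0,1) (1,0) s)) +
      ((2 : ℂ) • vecMulVec (ev17 (0,2) (2,0) t) (star (ev17 (0,2) (2,0) t)) +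
      (2 : ℂ) • vecMulVec (ev17 (1,2) (2,1) t) (star (ev17 (1,2) (2,1) t))))).PosSemidef := by
  have h16 : (0 : ℂ) ≤ 1 / 16 := by
    rw [Complex.le_def]; norm_num
  have h2 : (0 : ℂ) ≤ 2 := by
    rw [Complex.le_def]; norm_num
  refine PosSemidef.smul (PosSemidef.add (PosSemidef.add ?_ (posSemidef_vecMulVec_self_star _))
    (PosSemidef.add ((posSemidef_vecMulVec_self_star _).smul h2)
      ((posSemidef_vecMulVec_self_star _).smul h2))) h16
  exact PosSemidef.diagonal (fun p => Nat.cast_nonneg _)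

set_option linter.unusedSimpArgs false
set_option maxHeartbeats 4000000 in
/-- The example state is a density matrix satisfying the reduction criterion, yet its
partial transpose has eigenvector `ψ` with eigenvalue `-1/8`, and it is 1-distillable. -/
theorem example_state_distillable :
    rho17.PosSemidef ∧ rho17.trace = 1 ∧
    ((1 : Matrix (Fin 3) (Fin 3) ℂ) ⊗ₖ rhoB17 - rho17).PosSemidef ∧
    (rhoA17 ⊗ₖ (1 : Matrix (Fin 3) (Fin 3) ℂ) - rho17).PosSemidef ∧
    (∑ p, ‖psi17 p‖ ^ 2) = 1 ∧
    (ptB 3 rho17).mulVec psi17 = ((-(1 / 8 : ℝ) : ℝ) : ℂ) • psi17 ∧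
    ∃ φ : Fin 3 × Fin 3 → ℂ, φ ≠ 0 ∧ (toMat 3 φ).rank ≤ 2 ∧
      (star φ ⬝ᵥ (ptB 3 rho17).mulVec φ).re < 0 := by
  have h3 : ((Real.sqrt 3 : ℝ) : ℂ) ≠ 0 := by
    simp
  refine ⟨?_, ?_, ?_, ?_, ?_, ?_, ?_⟩
  · convert psd17 !![1,1,0;1,1,0;0,0,2] (-1) (1) using 1
    ext ⟨i, j⟩ ⟨k, l⟩
    fin_cases i <;> fin_cases j <;> fin_cases k <;> fin_cases l <;>
      simp [rho17, rhoA17, rhoB17, ev17, vecMulVec_apply, Matrix.diagonal_apply, Fin.sum_univ_three, Matrix.one_apply] <;> norm_num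
  · simp [Matrix.trace, Fintype.sum_prod_type, Fin.sum_univ_three, rho17]
    norm_num
  · convert psd17 !![4,2,2;2,4,2;1,1,4] (1) (-1) using 1
    ext ⟨i, j⟩ ⟨k, l⟩
    fin_cases i <;> fin_cases j <;> fin_cases k <;> fin_cases l <;>
      simp [rho17, rhoA17, rhoB17, ev17, vecMulVec_apply, Matrix.diagonal_apply, Fin.sum_univ_three, Matrix.one_apply] <;> norm_num
  · convert psd17 !![4,2,1;2,4,1;2,2,4] (1) (-1) using 1
    ext ⟨i, j⟩ ⟨k, l⟩
    fin_cases i <;> fin_cases j <;> fin_cases k <;> fin_cases l <;>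
      simp [rho17, rhoA17, rhoB17, ev17, vecMulVec_apply, Matrix.diagonal_apply, Fin.sum_univ_three, Matrix.one_apply] <;> norm_num
  · simp [psi17, Fintype.sum_prod_type, Fin.sum_univ_three, abs_of_nonneg]
    norm_num
  · ext ⟨i, j⟩
    fin_cases i <;> fin_cases j <;>
      simp [psi17, ptB, rho17, Matrix.mulVec, dotProduct, Fintype.sum_prod_type, Fin.sum_univ_three] <;>
      (try field_simp) <;> norm_num
  · refine ⟨fun p => if p = (0,0) then 1 else if p = (2,2) then -1 else 0, ?_, ?_, ?_⟩
    · intro h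
      simpa using congrFun h (0,0)
    · have : toMat 3 (fun p => if p = (0,0) then 1 else if p = (2,2) then -1 else 0) =
          (!![1,0;0,0;0,1] : Matrix (Fin 3) (Fin 2) ℂ) * (!![1,0,0;0,0,-1] : Matrix (Fin 2) (Fin 3) ℂ) := by
        ext i j
        fin_cases i <;> fin_cases j <;> simp [toMat, Matrix.mul_apply, Fin.sum_univ_two]
      rw [this]
      refine (Matrix.rank_mul_le_left _ _).trans ((Matrix.rank_le_width _).trans ?_)
      norm_num
    · simp [ptB, rho17, Matrix.mulVec, dotProduct, Fintype.sum_prod_type, Fin.sum_univ_three]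
end

section
/- Filtered Schmidt witnesses: let d ≥ 2, 1 ≤ n < d, and let a_1, …, a_d ≥ 0 with Σ_i a_i² = 1; set ψ = Σ_i a_i |ii⟩. Then for every positive semidefinite matrix σ on ℂ^d ⊗ ℂ^d of Schmidt number at most n, Re(Tr(σ · Σ_{i,j} a_i a_j |ij⟩⟨ij|)) ≥ (1/n) · ψ† σ ψ; equivalently, W_{n+1} = Σ_{i,j} a_i a_j |ij⟩⟨ij| − (1/n) ψψ† satisfies Re(Tr(W_{n+1} σ)) ≥ 0 for all such σ. -/
open Matrix BigOperators Kronecker ComplexOrder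

theorem aux_trace_rank (d : ℕ) (B : Matrix (Fin d) (Fin d) ℂ) :
    ‖B.trace‖ ^ 2 ≤ B.rank * ∑ i, ∑ j, ‖B i j‖ ^ 2 := by
  let S : Submodule ℂ (EuclideanSpace ℂ (Fin d)) :=
    (Submodule.span ℂ (Set.range B.col)).map
      (WithLp.linearEquiv 2 ℂ (Fin d → ℂ)).symm.toLinearMap
  have hS : Module.finrank ℂ S = B.rank := by
    rw [Matrix.rank_eq_finrank_span_cols]
    exact LinearEquiv.finrank_map_eq (WithLp.linearEquiv 2 ℂ (Fin d → ℂ)).symm _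
  let b := stdOrthonormalBasis ℂ S
  have hx : ∀ j, WithLp.toLp 2 (B.col j) ∈ S := fun j =>
    Submodule.mem_map_of_mem (Submodule.subset_span ⟨j, rfl⟩)
  let x : Fin d → S := fun j => ⟨_, hx j⟩
  let c : Fin d → Fin (Module.finrank ℂ S) → ℂ := fun j k => b.repr (x j) k
  have h1 : ∀ j, B j j = ∑ k, c j k * (b k : EuclideanSpace ℂ (Fin d)) j := by
    intro j
    have h := congrArg (fun y : S => (y : EuclideanSpace ℂ (Fin d)) j) (b.sum_repr (x j))
    simp only [Submodule.coe_sum, Submodule.coe_smul, WithLp.ofLp_sum, Finset.sum_apply,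
      PiLp.smul_apply, smul_eq_mul] at h
    exact h.symm
  have h2 : ∀ j, ∑ k, ‖c j k‖ ^ 2 = ∑ i, ‖B i j‖ ^ 2 := by
    intro j
    have h := b.repr.norm_map (x j)
    have e1 := EuclideanSpace.norm_sq_eq (b.repr (x j))
    have e2 := EuclideanSpace.norm_sq_eq (x j : EuclideanSpace ℂ (Fin d))
    rw [h] at e1
    exact e1.symm.trans e2
  have h3 : ∀ k, ∑ j, ‖(b k : EuclideanSpace ℂ (Fin d)) j‖ ^ 2 = 1 := by
    intro k
    rw [← EuclideanSpace.norm_sq_eq]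
    have := b.orthonormal.1 k
    rw [← Submodule.coe_norm, this]; norm_num
  have h4 : ‖B.trace‖ ≤ ∑ p : Fin d × Fin (Module.finrank ℂ S),
      ‖c p.1 p.2‖ * ‖(b p.2 : EuclideanSpace ℂ (Fin d)) p.1‖ := by
    rw [Fintype.sum_prod_type]
    unfold Matrix.trace
    refine (norm_sum_le _ _).trans (Finset.sum_le_sum fun j _ => ?_)
    rw [Matrix.diag_apply, h1 j]
    refine (norm_sum_le _ _).trans (Finset.sum_le_sum fun k _ => ?_)
    simp
  calc ‖B.trace‖ ^ 2 ≤ _ := pow_le_pow_left₀ (norm_nonneg _) h4 2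
    _ ≤ _ := Finset.sum_mul_sq_le_sq_mul_sq _ _ _
    _ = (∑ i, ∑ j, ‖B i j‖ ^ 2) * B.rank := by
      congr 1
      · rw [Fintype.sum_prod_type, Finset.sum_comm (f := fun i j => ‖B i j‖ ^ 2)]
        exact Finset.sum_congr rfl fun j _ => h2 j
      · rw [Fintype.sum_prod_type_right]
        simp only [h3]
        simp [hS]
    _ = _ := mul_comm _ _

theorem aux_vec (d n : ℕ) (a : Fin d → ℝ) (ha : ∀ i, 0 ≤ a i)
    (w : Fin d × Fin d → ℂ) (hw : (toMat d w).rank ≤ n) :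
    ‖∑ i, (a i : ℂ) * w (i, i)‖ ^ 2 ≤ n * ∑ p : Fin d × Fin d, a p.1 * a p.2 * ‖w p‖ ^ 2 := by
  let D : Matrix (Fin d) (Fin d) ℂ := Matrix.diagonal fun i => ((Real.sqrt (a i) : ℝ) : ℂ)
  have hB : ∀ i j, (D * toMat d w * D) i j
      = (Real.sqrt (a i) : ℂ) * w (i, j) * (Real.sqrt (a j) : ℂ) := by
    intro i j
    simp [D, toMat, Matrix.mul_diagonal, Matrix.diagonal_mul]
  have hr : (D * toMat d w * D).rank ≤ n :=
    ((Matrix.rank_mul_le_left _ _).trans (Matrix.rank_mul_le_right _ _)).trans hw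
  have h := aux_trace_rank d (D * toMat d w * D)
  have ht : (D * toMat d w * D).trace = ∑ i, (a i : ℂ) * w (i, i) := by
    refine Finset.sum_congr rfl fun i _ => ?_
    rw [Matrix.diag_apply, hB, mul_right_comm, ← Complex.ofReal_mul, Real.mul_self_sqrt (ha i)]
  have hf : ∑ i, ∑ j, ‖(D * toMat d w * D) i j‖ ^ 2
      = ∑ p : Fin d × Fin d, a p.1 * a p.2 * ‖w p‖ ^ 2 := by
    rw [Fintype.sum_prod_type]
    refine Finset.sum_congr rfl fun i _ => Finset.sum_congr rfl fun j _ => ?_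
    rw [hB, norm_mul, norm_mul, Complex.norm_real, Complex.norm_real, mul_pow, mul_pow,
      Real.norm_eq_abs, Real.norm_eq_abs, sq_abs, sq_abs, Real.sq_sqrt (ha i),
      Real.sq_sqrt (ha j)]
    ring
  rw [ht, hf] at h
  refine h.trans (mul_le_mul_of_nonneg_right (by exact_mod_cast hr) ?_)
  exact Finset.sum_nonneg fun p _ => mul_nonneg (mul_nonneg (ha _) (ha _)) (sq_nonneg _)

theorem aux_ket (d : ℕ) (a : Fin d → ℝ) (w : Fin d × Fin d → ℂ) :
    star (ketDiag d a) ⬝ᵥ w = ∑ i, (a i : ℂ) * w (i, i) := by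
  simp only [dotProduct, Fintype.sum_prod_type, ketDiag, Pi.star_apply]
  refine Finset.sum_congr rfl fun i _ => ?_
  rw [Finset.sum_eq_single i]
  · simp
  · intro j _ hj
    simp [Ne.symm hj]
  · simp

theorem aux_lhs (d : ℕ) (a : Fin d → ℝ) (w : Fin d × Fin d → ℂ) :
    (star (ketDiag d a) ⬝ᵥ (Matrix.vecMulVec w (star w)).mulVec (ketDiag d a)).re
      = ‖∑ i, (a i : ℂ) * w (i, i)‖ ^ 2 := by
  have h : star w ⬝ᵥ ketDiag d a = star (star (ketDiag d a) ⬝ᵥ w) := by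
    rw [Matrix.star_dotProduct]
  rw [Matrix.vecMulVec_mulVec, h, dotProduct_smul, aux_ket]
  simp only [MulOpposite.smul_eq_mul_unop, MulOpposite.unop_op]
  rw [← starRingEnd_apply, Complex.mul_conj, Complex.normSq_eq_norm_sq, Complex.ofReal_re]

theorem aux_rhs (d : ℕ) (a : Fin d → ℝ) (w : Fin d × Fin d → ℂ) :
    ((Matrix.vecMulVec w (star w) * Matrix.diagonal
          (fun p : Fin d × Fin d => ((a p.1 * a p.2 : ℝ) : ℂ))).trace).re
      = ∑ p : Fin d × Fin d, a p.1 * a p.2 * ‖w p‖ ^ 2 := by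
  unfold Matrix.trace
  rw [Complex.re_sum]
  refine Finset.sum_congr rfl fun p _ => ?_
  rw [Matrix.diag_apply, Matrix.mul_diagonal, Matrix.vecMulVec_apply, Pi.star_apply,
    ← starRingEnd_apply, Complex.mul_conj, Complex.normSq_eq_norm_sq, ← Complex.ofReal_mul,
    Complex.ofReal_re]
  ring

/-- Filtered Schmidt witnesses: `W = Σ_{i,j} a_i a_j |ij⟩⟨ij| - (1/n) ψψᴴ` is
nonnegative on every psd matrix of Schmidt number at most `n`. -/
theorem filtered_schmidt_witness (d n : ℕ) (hd : 2 ≤ d) (hn : 1 ≤ n) (hnd : n < d)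
    (a : Fin d → ℝ) (ha : ∀ i, 0 ≤ a i) (hnorm : ∑ i, a i ^ 2 = 1) :
    ∀ σ : Matrix (Fin d × Fin d) (Fin d × Fin d) ℂ, σ.PosSemidef →
      SchmidtNumberLE d σ n →
      (1 / (n : ℝ)) * (star (ketDiag d a) ⬝ᵥ σ.mulVec (ketDiag d a)).re ≤
        ((σ * Matrix.diagonal
          (fun p : Fin d × Fin d => ((a p.1 * a p.2 : ℝ) : ℂ))).trace).re ∧
      0 ≤ (((Matrix.diagonal (fun p : Fin d × Fin d => ((a p.1 * a p.2 : ℝ) : ℂ)) -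
        (1 / (n : ℝ)) • Matrix.vecMulVec (ketDiag d a) (star (ketDiag d a))) *
          σ).trace).re := by
  intro σ _ hσ
  have hn0 : (0 : ℝ) < n := by exact_mod_cast hn
  have key : (1 / (n : ℝ)) * (star (ketDiag d a) ⬝ᵥ σ.mulVec (ketDiag d a)).re ≤
        ((σ * Matrix.diagonal
          (fun p : Fin d × Fin d => ((a p.1 * a p.2 : ℝ) : ℂ))).trace).re := by
    obtain ⟨k, w, hw, rfl⟩ := hσ
    rw [Matrix.sum_mulVec, dotProduct_sum, Complex.re_sum, Finset.sum_mul, Matrix.trace_sum,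
      Complex.re_sum, Finset.mul_sum]
    refine Finset.sum_le_sum fun i _ => ?_
    rw [aux_lhs, aux_rhs, one_div, inv_mul_le_iff₀ hn0]
    exact aux_vec d n a ha (w i) (hw i)
  refine ⟨key, ?_⟩
  have h2 : (Matrix.vecMulVec (ketDiag d a) (star (ketDiag d a)) * σ).trace
      = star (ketDiag d a) ⬝ᵥ σ.mulVec (ketDiag d a) := by
    rw [Matrix.vecMulVec_mul, Matrix.trace_vecMulVec, dotProduct_comm, Matrix.dotProduct_mulVec]
  rw [Matrix.sub_mul, Matrix.trace_sub, Matrix.smul_mul, Matrix.trace_smul, h2,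
    Matrix.trace_mul_comm, Complex.sub_re, Complex.smul_re, smul_eq_mul]
  linarith
end
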